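/- arXiv:2212.07165 — 4 statements merged into one kernel-verified Lean document; each statement's English description precedes it below -/
import Mathlib

section
/- Every finitely generated, residually finite group G embeds into a finitely generated group Γ (i.e., there exists an injective group homomorphism G → Γ) such that Γ is perfect, infinite and residually finite, and moreover: if G is a torsion group then Γ is a torsion group, and if G contains no non-abelian free subgroup then Γ contains no non-abelian free subgroup. (This is the content of Theorem 1.1 of the paper, with the conclusions that are expressible without the notion of a branch group.) -/
/-- A group `G` is residually finite if every non-identity element avoids some
finite-index normal subgroup. -/
def ResiduallyFinite (G : Type*) [Group G] : Prop :=
  ∀ g : G, g ≠ 1 → ∃ N : Subgroup G, N.Normal ∧ N.FiniteIndex ∧ g ∉ N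

/-- A group `H` contains a non-abelian free subgroup if the free group on two
generators embeds into `H`. -/
def ContainsNonabelianFree (H : Type*) [Group H] : Prop :=
  ∃ f : FreeGroup (Fin 2) →* H, Function.Injective f

/-!
Let `H` be the product of `G` with the Gupta–Sidki `3`-group, an infinite finitely generated
residually finite torsion group whose only role is to make `H` infinite. In the wreath product of
`H` by the alternating group on a finite set `ι` with at least five elements, let `Γ` be the kernel
of the augmentation `(f, σ) ↦ ∏ i, [f i]` with values in the abelianization of `H`.

The group `Γ` is generated by the alternating group and the functions with value `h` at `i` and
`h⁻¹` at `j`. With three indices available, a product `g * h` at `i, j` is a product of such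
functions for `g` and `h` separately, so that generators of `H` suffice; and each such function is a
commutator of another one with an even permutation, so that `Γ` is perfect.

Modulo torsion, every element of the finitely generated group `Abelianization H` is a product of
values of homomorphisms through `ℤ`, and these lift to endomorphisms of `H`. Their inverses
compensate finitely many copies of the identity of `H`, which embeds `H` into `Γ` by a map to
`ι → H`. Finally, `Γ` is a subgroup of a finite extension of `ι → H`. This transfers residual
finiteness and torsion from `H` to `Γ`, and also the absence of free subgroups because nontrivial
normal subgroups of a free group of rank two intersect nontrivially.
-/

section ResiduallyFinite

variable {G H : Type*} [Group G] [Group H]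

theorem residuallyFinite_iff : ResiduallyFinite G ↔ Group.ResiduallyFinite G := by
  rw [Group.residuallyFinite_iff_exists_finiteIndexNormalSubgroup]
  refine forall₂_congr fun g _ ↦ ⟨?_, ?_⟩
  · rintro ⟨N, _, _, hg⟩
    exact ⟨.ofSubgroup N, hg⟩
  · rintro ⟨N, hg⟩
    exact ⟨N.toSubgroup, inferInstance, inferInstance, hg⟩

theorem residuallyFinite_of_forall_exists_monoidHom
    (h : ∀ g : G, g ≠ 1 →
      ∃ (H : Type*) (_ : Group H) (_ : Group.ResiduallyFinite H) (f : G →* H), f g ≠ 1) :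
    Group.ResiduallyFinite G := by
  refine Group.residuallyFinite_iff_exists_finiteIndexNormalSubgroup.mpr fun g hg ↦ ?_
  obtain ⟨H, _, _, f, hfg⟩ := h g hg
  obtain ⟨N, hN⟩ := Group.exists_finiteIndexNormalSubgroup_notMem (f g) hfg
  exact ⟨N.comap f, hN⟩

theorem residuallyFinite_of_injective (f : G →* H) (hf : Function.Injective f)
    [Group.ResiduallyFinite H] : Group.ResiduallyFinite G :=
  residuallyFinite_of_forall_exists_monoidHom fun _ hg ↦
    ⟨H, inferInstance, inferInstance, f, (map_ne_one_iff f hf).mpr hg⟩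

theorem residuallyFinite_pi (ι : Type*) [Group.ResiduallyFinite G] :
    Group.ResiduallyFinite (ι → G) :=
  residuallyFinite_of_forall_exists_monoidHom fun _ hg ↦
    have ⟨i, hi⟩ := Function.ne_iff.mp hg
    ⟨G, inferInstance, inferInstance, Pi.evalMonoidHom _ i, hi⟩

theorem residuallyFinite_of_finiteIndex (K : Subgroup G) [K.FiniteIndex]
    [Group.ResiduallyFinite K] : Group.ResiduallyFinite G := by
  refine Group.residuallyFinite_iff_exists_finiteIndex.mpr fun g hg ↦ ?_
  by_cases hgK : g ∈ K
  · obtain ⟨N, hN⟩ := Group.exists_finiteIndexNormalSubgroup_notMem (⟨g, hgK⟩ : K)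
      (by simpa [Subtype.ext_iff] using hg)
    refine ⟨N.toSubgroup.map K.subtype, ⟨?_⟩, ?_⟩
    · rw [Subgroup.index_map_subtype]
      exact mul_ne_zero Subgroup.FiniteIndex.index_ne_zero Subgroup.FiniteIndex.index_ne_zero
    · rintro ⟨x, hx, rfl⟩
      exact hN hx
  · exact ⟨K, inferInstance, hgK⟩

theorem residuallyFinite_of_finite_orbits {α : Type*} [MulAction G α] [FaithfulSMul G α]
    (h : ∀ a : α, (MulAction.orbit G a).Finite) : Group.ResiduallyFinite G := by
  refine Group.residuallyFinite_iff_exists_finiteIndex.mpr fun g hg ↦ ?_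
  obtain ⟨a, ha⟩ : ∃ a : α, g • a ≠ a := by
    by_contra! hfix
    exact hg (eq_of_smul_eq_smul fun a : α ↦ by rw [hfix, one_smul])
  refine ⟨MulAction.stabilizer G a, ⟨?_⟩, ha⟩
  rw [MulAction.index_stabilizer]
  have := (h a).to_subtype
  exact (Set.ncard_pos (h a)).mpr ⟨a, MulAction.mem_orbit_self a⟩ |>.ne'

end ResiduallyFinite

section FreeSubgroups

variable {G H : Type*} [Group G] [Group H]

theorem ContainsNonabelianFree.map (f : G →* H) (hf : Function.Injective f)
    (h : ContainsNonabelianFree G) : ContainsNonabelianFree H :=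
  have ⟨g, hg⟩ := h
  ⟨f.comp g, hf.comp hg⟩

theorem not_commute_freeGroup_of_zero_of_one :
    ¬Commute (FreeGroup.of (0 : Fin 2)) (FreeGroup.of 1) := by
  unfold Commute SemiconjBy
  decide

theorem subsingleton_generators_or_containsNonabelianFree (F : Type*) [Group F] [IsFreeGroup F] :
    Subsingleton (IsFreeGroup.Generators F) ∨ ContainsNonabelianFree F := by
  rw [or_iff_not_imp_left, not_subsingleton_iff_nontrivial]
  rintro ⟨x, y, hxy⟩
  have hinj : Function.Injective ![x, y] := by
    simpa [Function.Injective, Fin.forall_fin_two] using ⟨hxy, hxy.symm⟩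
  exact .map (IsFreeGroup.toFreeGroup F).symm.toMonoidHom (IsFreeGroup.toFreeGroup F).symm.injective
    ⟨FreeGroup.map ![x, y], FreeGroup.map_injective hinj⟩

theorem isCyclic_of_subsingleton_generators {F : Type*} [Group F] [IsFreeGroup F]
    [Subsingleton (IsFreeGroup.Generators F)] : IsCyclic F := by
  suffices IsCyclic (FreeGroup (IsFreeGroup.Generators F)) from
    isCyclic_of_surjective _ (IsFreeGroup.toFreeGroup F).symm.surjective
  rcases isEmpty_or_nonempty (IsFreeGroup.Generators F) with _ | ⟨⟨x⟩⟩
  · infer_instance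
  · have := uniqueOfSubsingleton x
    infer_instance

theorem containsNonabelianFree_of_not_commute {F : Type*} [Group F] [IsFreeGroup F] {a b : F}
    (h : ¬Commute a b) : ContainsNonabelianFree F :=
  (subsingleton_generators_or_containsNonabelianFree F).resolve_left fun _ ↦
    have := isCyclic_of_subsingleton_generators (F := F)
    h (IsMulCommutative.is_comm.comm a b)

theorem exists_eq_zpow_of_commute {F : Type*} [Group F] [IsFreeGroup F] {a b : F}
    (h : Commute a b) : ∃ (c : F) (i j : ℤ), c ^ i = a ∧ c ^ j = b := by
  have := Subgroup.isMulCommutative_closure (k := {a, b}) (by simp [h.eq])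
  have : IsCyclic (Subgroup.closure {a, b}) := by
    rcases subsingleton_generators_or_containsNonabelianFree (Subgroup.closure {a, b}) with
      _ | ⟨f, hf⟩
    · exact isCyclic_of_subsingleton_generators
    · exact absurd (hf (by simp only [map_mul, mul_comm'])) not_commute_freeGroup_of_zero_of_one
  obtain ⟨c, hc⟩ := IsCyclic.exists_generator (α := Subgroup.closure {a, b})
  obtain ⟨i, hi⟩ := hc ⟨a, Subgroup.subset_closure (by simp)⟩
  obtain ⟨j, hj⟩ := hc ⟨b, Subgroup.subset_closure (by simp)⟩
  exact ⟨c, i, j, congrArg Subtype.val hi, congrArg Subtype.val hj⟩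

theorem commute_of_commute_pow_left [IsMulTorsionFree G] {a b : G} {n : ℕ} (hn : n ≠ 0)
    (h : Commute (a ^ n) b) : Commute a b := by
  have hconj : (b * a * b⁻¹) ^ n = a ^ n := by
    rw [conj_pow, ← h.eq, mul_inv_cancel_right]
  exact (mul_inv_eq_iff_eq_mul.mp (pow_left_injective hn hconj)).symm

theorem freeGroup_eq_bot_or_eq_bot_of_disjoint {α : Type*} {A B : Subgroup (FreeGroup α)}
    (hA : A.Normal) (hB : B.Normal) (h : Disjoint A B) : A = ⊥ ∨ B = ⊥ := by
  by_contra! hne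
  obtain ⟨a, haA, ha⟩ := A.bot_or_exists_ne_one.resolve_left hne.1
  obtain ⟨b, hbB, hb⟩ := B.bot_or_exists_ne_one.resolve_left hne.2
  obtain ⟨c, i, j, rfl, rfl⟩ := exists_eq_zpow_of_commute
    (Subgroup.commute_of_normal_of_disjoint A B hA hB h _ _ haA hbB)
  have hc : c ^ (i * j) = 1 := Subgroup.disjoint_def.mp h
    (zpow_mul c i j ▸ A.zpow_mem haA j) (mul_comm i j ▸ zpow_mul c j i ▸ B.zpow_mem hbB i)
  simp_all [IsMulTorsionFree.zpow_eq_one_iff]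

namespace ContainsNonabelianFree

theorem of_pow_mem {K : Subgroup (FreeGroup (Fin 2))} {m n : ℕ} (hm : m ≠ 0) (hn : n ≠ 0)
    (h₀ : FreeGroup.of 0 ^ m ∈ K) (h₁ : FreeGroup.of 1 ^ n ∈ K) : ContainsNonabelianFree K := by
  refine containsNonabelianFree_of_not_commute (a := ⟨_, h₀⟩) (b := ⟨_, h₁⟩) fun h ↦ ?_
  have h₀₁ := commute_of_commute_pow_left hm (h.map K.subtype)
  exact not_commute_freeGroup_of_zero_of_one (commute_of_commute_pow_left hn h₀₁.symm).symm

theorem of_finiteIndex (K : Subgroup G) [K.FiniteIndex] (h : ContainsNonabelianFree G) :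
    ContainsNonabelianFree K := by
  obtain ⟨f, hf⟩ := h
  obtain ⟨m, hm, -, h₀⟩ := K.exists_pow_mem_of_index_ne_zero
    Subgroup.FiniteIndex.index_ne_zero (f (.of 0))
  obtain ⟨n, hn, -, h₁⟩ := K.exists_pow_mem_of_index_ne_zero
    Subgroup.FiniteIndex.index_ne_zero (f (.of 1))
  refine (of_pow_mem (K := K.comap f) hm.ne' hn.ne' (by simpa) (by simpa)).map
    (f.subgroupComap K) fun x y hxy ↦ ?_
  exact Subtype.ext (hf (congrArg Subtype.val hxy))

theorem of_prod (h : ContainsNonabelianFree (G × H)) :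
    ContainsNonabelianFree G ∨ ContainsNonabelianFree H := by
  obtain ⟨f, hf⟩ := h
  have hdisj : Disjoint ((MonoidHom.fst G H).comp f).ker ((MonoidHom.snd G H).comp f).ker :=
    Subgroup.disjoint_def.mpr fun h₁ h₂ ↦ (map_eq_one_iff f hf).mp (Prod.ext h₁ h₂)
  exact (freeGroup_eq_bot_or_eq_bot_of_disjoint inferInstance inferInstance hdisj).imp
    (fun h ↦ ⟨_, (MonoidHom.ker_eq_bot_iff _).mp h⟩) fun h ↦ ⟨_, (MonoidHom.ker_eq_bot_iff _).mp h⟩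

theorem of_pi {ι : Type*} [Finite ι] (h : ContainsNonabelianFree (ι → G)) :
    ContainsNonabelianFree G := by
  obtain ⟨f, hf⟩ := h
  have := Fintype.ofFinite ι
  let N (i : ι) := ((Pi.evalMonoidHom (fun _ ↦ G) i).comp f).ker
  by_contra hG
  have hinf : (Finset.univ.inf N).Normal ∧ Finset.univ.inf N ≠ ⊥ := by
    refine Finset.inf_induction (p := fun A : Subgroup (FreeGroup (Fin 2)) ↦ A.Normal ∧ A ≠ ⊥)
      ⟨inferInstance, top_ne_bot⟩ ?_ ?_
    · rintro A ⟨hA, hA'⟩ B ⟨hB, hB'⟩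
      refine ⟨inferInstance, fun hAB ↦ ?_⟩
      exact (freeGroup_eq_bot_or_eq_bot_of_disjoint hA hB (disjoint_iff.mpr hAB)).elim hA' hB'
    · exact fun i _ ↦ ⟨inferInstance, fun hi ↦ hG ⟨_, (MonoidHom.ker_eq_bot_iff _).mp hi⟩⟩
  refine hinf.2 (eq_bot_iff.mpr fun x hx ↦ (map_eq_one_iff f hf).mp (funext fun i ↦ ?_))
  exact Finset.inf_le (f := N) (Finset.mem_univ i) hx

theorem not_isMulTorsion (h : ContainsNonabelianFree G) : ¬IsMulTorsion G :=
  have ⟨f, hf⟩ := h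
  fun hG ↦ FreeGroup.of_ne_one 0 (hf.isOfFinOrder_iff.mp (hG (f (.of 0)))).eq_one'

end ContainsNonabelianFree

end FreeSubgroups

section MulSingleDiv

variable {ι G : Type*} [Group G] [DecidableEq ι]

/-- The function with value `g` at `i`, value `g⁻¹` at `j` and `1` elsewhere. For `i = j` it is
constantly `1`. -/
def mulSingleDiv (i j : ι) (g : G) : ι → G :=
  Pi.mulSingle i g / Pi.mulSingle j g

theorem mulSingleDiv_one (i j : ι) : mulSingleDiv i j (1 : G) = 1 := by
  rw [mulSingleDiv, Pi.mulSingle_one, Pi.mulSingle_one, div_one]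

theorem mulSingleDiv_inv (i j : ι) (g : G) : mulSingleDiv i j g⁻¹ = (mulSingleDiv i j g)⁻¹ := by
  ext l
  obtain rfl | hi := eq_or_ne l i <;> obtain rfl | hj := eq_or_ne l j <;>
    simp_all [mulSingleDiv]

theorem mulSingleDiv_mul {i j k : ι} (hik : i ≠ k) (hjk : j ≠ k) (g h : G) :
    mulSingleDiv i j (g * h) = mulSingleDiv i k g * mulSingleDiv i j h * mulSingleDiv k j g := by
  ext l
  obtain rfl | hi := eq_or_ne l i <;> obtain rfl | hj := eq_or_ne l j <;>
    obtain rfl | hk := eq_or_ne l k <;> simp_all [mulSingleDiv]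

theorem mulSingleDiv_mul_inv_mulSingleDiv (i j k : ι) (g : G) :
    mulSingleDiv i k g * (mulSingleDiv j k g)⁻¹ = mulSingleDiv i j g := by
  ext l
  obtain rfl | hi := eq_or_ne l i <;> obtain rfl | hj := eq_or_ne l j <;>
    obtain rfl | hk := eq_or_ne l k <;> simp_all [mulSingleDiv]

theorem conj_mulSingleDiv {i j k : ι} (hik : i ≠ k) (hjk : j ≠ k) (f : ι → G) (g : G) :
    f * mulSingleDiv i j g * f⁻¹ = (mulSingleDiv i k (f i) * mulSingleDiv j k (f j)) *
      mulSingleDiv i j g * (mulSingleDiv i k (f i) * mulSingleDiv j k (f j))⁻¹ := by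
  ext l
  obtain rfl | hi := eq_or_ne l i <;> obtain rfl | hj := eq_or_ne l j <;>
    obtain rfl | hk := eq_or_ne l k <;> simp_all [mulSingleDiv]

theorem mulAutArrow_mulSingleDiv {P : Type*} [Group P] [MulAction P ι] (σ : P) (i j : ι) (g : G) :
    mulAutArrow σ (mulSingleDiv i j g) = mulSingleDiv (σ • i) (σ • j) g := by
  ext l
  change mulSingleDiv i j g (σ⁻¹ • l) = mulSingleDiv (σ • i) (σ • j) g l
  simp only [mulSingleDiv, Pi.div_apply, Pi.mulSingle_apply, inv_smul_eq_iff]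

/-- The subgroup generated by the functions `mulSingleDiv i j s` for `s` in `S`. -/
def mulSingleDivSubgroup (ι : Type*) [DecidableEq ι] (S : Set G) : Subgroup (ι → G) :=
  Subgroup.closure {f | ∃ i j, ∃ s ∈ S, mulSingleDiv i j s = f}

theorem mulSingleDiv_mem {S : Set G} (i j : ι) {s : G} (hs : s ∈ S) :
    mulSingleDiv i j s ∈ mulSingleDivSubgroup ι S :=
  Subgroup.subset_closure ⟨i, j, s, hs, rfl⟩

theorem mulSingleDiv_mem_of_closure_eq_top (hι : 3 ≤ ENat.card ι) {S : Set G}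
    (hS : Subgroup.closure S = ⊤) (i j : ι) (g : G) :
    mulSingleDiv i j g ∈ mulSingleDivSubgroup ι S := by
  have hg : g ∈ Subgroup.closure S := hS ▸ Subgroup.mem_top g
  induction hg using Subgroup.closure_induction generalizing i j with
  | mem s hs => exact mulSingleDiv_mem i j hs
  | one => simpa only [mulSingleDiv_one] using one_mem _
  | mul g h _ _ ihg ihh =>
    obtain ⟨k, hki, hkj⟩ := ENat.exists_ne_ne_of_three_le hι i j
    rw [mulSingleDiv_mul hki.symm hkj.symm]
    exact mul_mem (mul_mem (ihg i k) (ihh i j)) (ihg k j)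
  | inv g _ ih => simpa only [mulSingleDiv_inv] using inv_mem (ih i j)

theorem mulSingleDivSubgroup_normal (hι : 3 ≤ ENat.card ι) {S : Set G}
    (hS : Subgroup.closure S = ⊤) : (mulSingleDivSubgroup ι S).Normal := by
  have hmem := mulSingleDiv_mem_of_closure_eq_top hι hS
  refine ⟨fun v hv f ↦ ?_⟩
  suffices mulSingleDivSubgroup ι S ≤
      (mulSingleDivSubgroup ι S).comap (MulAut.conj f).toMonoidHom from this hv
  refine (Subgroup.closure_le _).mpr ?_
  rintro _ ⟨i, j, s, -, rfl⟩
  obtain ⟨k, hki, hkj⟩ := ENat.exists_ne_ne_of_three_le hι i j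
  change f * mulSingleDiv i j s * f⁻¹ ∈ mulSingleDivSubgroup ι S
  rw [conj_mulSingleDiv hki.symm hkj.symm]
  have hu := mul_mem (hmem i k (f i)) (hmem j k (f j))
  exact mul_mem (mul_mem hu (hmem i j s)) (inv_mem hu)

section Fintype

variable [Fintype ι]

variable (ι G) in
/-- The product over `ι` in the abelianization. -/
def prodAbelianization : (ι → G) →* Abelianization G :=
  ∏ i, Abelianization.of.comp (Pi.evalMonoidHom (fun _ ↦ G) i)

theorem prodAbelianization_mulSingle (i : ι) (g : G) :
    prodAbelianization ι G (Pi.mulSingle i g) = Abelianization.of g := by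
  rw [prodAbelianization, MonoidHom.finsetProd_apply, Finset.prod_eq_single i]
  all_goals simp +contextual

theorem prodAbelianization_mulSingleDiv (i j : ι) (g : G) :
    prodAbelianization ι G (mulSingleDiv i j g) = 1 := by
  rw [mulSingleDiv, map_div, prodAbelianization_mulSingle, prodAbelianization_mulSingle, div_self']

theorem ker_prodAbelianization_le [Nontrivial ι] {V : Subgroup (ι → G)} (hV : V.Normal)
    (hVmem : ∀ i j g, mulSingleDiv i j g ∈ V) : (prodAbelianization ι G).ker ≤ V := by
  obtain ⟨o, i, hoi⟩ := exists_pair_ne ι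
  let θ : G →* (ι → G) ⧸ V := (QuotientGroup.mk' V).comp (MonoidHom.mulSingle (fun _ ↦ G) o)
  have hθ (i : ι) (g : G) : QuotientGroup.mk' V (Pi.mulSingle i g) = θ g :=
    QuotientGroup.eq_iff_div_mem.mpr (hVmem i o g)
  have hcomm : commutator G ≤ θ.ker := by
    refine Subgroup.commutator_le.mpr fun g _ h _ ↦ ?_
    rw [MonoidHom.mem_ker, map_commutatorElement, commutatorElement_eq_one_iff_commute,
      ← hθ o g, ← hθ i h]
    exact (Pi.mulSingle_commute (f := fun _ ↦ G) hoi g h).map _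
  obtain ⟨θ', hθ'⟩ : ∃ θ' : Abelianization G →* (ι → G) ⧸ V, ∀ g, θ' (.of g) = θ g :=
    ⟨QuotientGroup.lift (commutator G) θ hcomm, fun _ ↦ rfl⟩
  have hfactor : θ'.comp (prodAbelianization ι G) = QuotientGroup.mk' V :=
    MonoidHom.pi_ext fun i g ↦ by
      rw [MonoidHom.comp_apply, prodAbelianization_mulSingle, hθ', hθ]
  intro f hf
  rw [← QuotientGroup.ker_mk' V, MonoidHom.mem_ker, ← hfactor, MonoidHom.comp_apply, hf, map_one]

theorem mulSingleDivSubgroup_eq_ker (hι : 3 ≤ ENat.card ι) {S : Set G}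
    (hS : Subgroup.closure S = ⊤) : mulSingleDivSubgroup ι S = (prodAbelianization ι G).ker := by
  have : Nontrivial ι := (ENat.one_lt_card_iff_nontrivial ι).mp (lt_of_lt_of_le (by norm_num) hι)
  refine le_antisymm ((Subgroup.closure_le _).mpr ?_) ?_
  · rintro _ ⟨i, j, s, -, rfl⟩
    exact prodAbelianization_mulSingleDiv i j s
  · exact ker_prodAbelianization_le (mulSingleDivSubgroup_normal hι hS)
      (mulSingleDiv_mem_of_closure_eq_top hι hS)

end Fintype

end MulSingleDiv

theorem ker_prodAbelianization_fg {ι G : Type*} [Fintype ι] [Group G] [Group.FG G]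
    (hι : 3 ≤ ENat.card ι) : (prodAbelianization ι G).ker.FG := by
  classical
  obtain ⟨S, hS, hfin⟩ := Group.fg_iff.mp ‹Group.FG G›
  rw [← mulSingleDivSubgroup_eq_ker hι hS, Subgroup.fg_iff]
  refine ⟨_, rfl, (Set.Finite.image (fun p : (ι × ι) × G ↦ mulSingleDiv p.1.1 p.1.2 p.2)
    ((Set.finite_univ (α := ι × ι)).prod hfin)).subset ?_⟩
  rintro _ ⟨i, j, s, hs, rfl⟩
  exact ⟨((i, j), s), ⟨Set.mem_univ _, hs⟩, rfl⟩

theorem subgroup_map_fg {G H : Type*} [Group G] [Group H] {K : Subgroup G} (hK : K.FG)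
    (f : G →* H) : (K.map f).FG := by
  obtain ⟨S, rfl, hS⟩ := (Subgroup.fg_iff K).mp hK
  exact (Subgroup.fg_iff _).mpr ⟨f '' S, (f.map_closure S).symm, hS.image f⟩

section PermutationalWreathProduct

open scoped commutatorElement

variable (ι G P : Type*) [Group G] [Group P] [MulAction P ι]

/-- The unrestricted permutational wreath product of `G` by a group `P` acting on `ι`. -/
abbrev PermWreathProduct : Type _ := (ι → G) ⋊[mulAutArrow (A := ι) (M := G)] P

theorem commutator_inl_mulSingleDiv_inr {ι G P : Type*} [Group G] [Group P] [MulAction P ι]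
    [DecidableEq ι] {i j k : ι} {σ : P} (hij : σ • i = j) (hk : σ • k = k) (g : G) :
    ⁅(SemidirectProduct.inl (mulSingleDiv i k g) : PermWreathProduct ι G P),
      (SemidirectProduct.inr σ : PermWreathProduct ι G P)⁆ =
        SemidirectProduct.inl (mulSingleDiv i j g) := by
  have hconj := SemidirectProduct.inl_aut (φ := mulAutArrow (A := ι) (M := G)) σ
    (mulSingleDiv i k g)
  rw [mulAutArrow_mulSingleDiv, hij, hk, map_inv] at hconj
  rw [← mulSingleDiv_mul_inv_mulSingleDiv i j k, map_mul, map_inv, hconj]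
  simp only [commutatorElement_def, mul_inv_rev, inv_inv, mul_assoc]

variable [Fintype ι]

/-- The homomorphism from the permutational wreath product to the abelianization of `G` which
multiplies the classes of all coordinates and forgets the permutation. -/
def augmentation : PermWreathProduct ι G P →* Abelianization G :=
  SemidirectProduct.lift (prodAbelianization ι G) 1 fun σ ↦ by
    refine MonoidHom.ext fun f ↦ ?_
    simp only [prodAbelianization, MonoidHom.comp_apply, MonoidHom.finsetProd_apply,
      MonoidHom.one_apply, map_one]
    exact Equiv.prod_comp (MulAction.toPerm σ⁻¹) fun i ↦ Abelianization.of (f i)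

variable {ι G P}

theorem augmentation_ker_eq : (augmentation ι G P).ker =
    (prodAbelianization ι G).ker.map SemidirectProduct.inl ⊔ SemidirectProduct.inr.range := by
  refine le_antisymm (fun x hx ↦ ?_) (sup_le ?_ ?_)
  · rw [← SemidirectProduct.inl_left_mul_inr_right x]
    refine Subgroup.mul_mem_sup ⟨x.left, ?_, rfl⟩ ⟨x.right, rfl⟩
    simpa [augmentation, SemidirectProduct.lift] using hx
  · rintro _ ⟨f, hf, rfl⟩
    simpa [augmentation] using hf
  · rintro _ ⟨σ, rfl⟩
    simp [augmentation]

theorem augmentation_ker_fg [Group.FG G] [Group.FG P] (hι : 3 ≤ ENat.card ι) :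
    Group.FG (augmentation ι G P).ker := by
  rw [Group.fg_iff_subgroup_fg, augmentation_ker_eq, MonoidHom.range_eq_map]
  exact (subgroup_map_fg (ker_prodAbelianization_fg hι) _).sup
    (subgroup_map_fg (Group.fg_def.mp inferInstance) _)

theorem inl_mem_augmentation_ker {f : ι → G} (hf : f ∈ (prodAbelianization ι G).ker) :
    SemidirectProduct.inl f ∈ (augmentation ι G P).ker := by
  rw [augmentation_ker_eq]
  exact Subgroup.mem_sup_left ⟨f, hf, rfl⟩

theorem range_inr_le_augmentation_ker :
    (SemidirectProduct.inr : P →* PermWreathProduct ι G P).range ≤ (augmentation ι G P).ker := by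
  rw [augmentation_ker_eq]
  exact le_sup_right

theorem augmentation_ker_isPerfect [Group.IsPerfect P] [MulAction.IsMultiplyPretransitive P ι 2]
    (hι : 3 ≤ ENat.card ι) : Group.IsPerfect (augmentation ι G P).ker := by
  classical
  refine Subgroup.isPerfect_iff.mpr (le_antisymm (Subgroup.commutator_le_self _) ?_)
  conv_lhs => rw [augmentation_ker_eq, ← mulSingleDivSubgroup_eq_ker hι Subgroup.closure_univ]
  refine sup_le (Subgroup.map_le_iff_le_comap.mpr ((Subgroup.closure_le _).mpr ?_)) ?_
  · rintro _ ⟨i, j, g, -, rfl⟩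
    obtain ⟨k, hki, hkj⟩ := ENat.exists_ne_ne_of_three_le hι i j
    obtain ⟨σ, hσk, hσi⟩ := MulAction.is_two_pretransitive_iff.mp ‹_› hki hkj
    rw [SetLike.mem_coe, Subgroup.mem_comap, ← commutator_inl_mulSingleDiv_inr hσi hσk]
    exact Subgroup.commutator_mem_commutator
      (inl_mem_augmentation_ker (prodAbelianization_mulSingleDiv i k g))
      (range_inr_le_augmentation_ker ⟨σ, rfl⟩)
  · have := Group.IsPerfect.range
      (SemidirectProduct.inr : P →* PermWreathProduct ι G P)
    rw [← Subgroup.commutator_eq_self (H := MonoidHom.range _)]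
    exact Subgroup.commutator_mono range_inr_le_augmentation_ker range_inr_le_augmentation_ker

end PermutationalWreathProduct

section SemidirectProduct

variable {N P : Type*} [Group N] [Group P] {φ : P →* MulAut N}

theorem isMulTorsion_semidirectProduct (hN : IsMulTorsion N) (hP : IsMulTorsion P) :
    IsMulTorsion (N ⋊[φ] P) := by
  refine IsMulTorsion.extension_closed SemidirectProduct.range_inl_eq_ker_rightHom hP ?_
  rintro ⟨_, n, rfl⟩
  exact SemidirectProduct.inl.rangeRestrict.isOfFinOrder (hN n)

variable [Finite P]

theorem finiteIndex_range_inl :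
    (SemidirectProduct.inl : N →* N ⋊[φ] P).range.FiniteIndex := by
  rw [SemidirectProduct.range_inl_eq_ker_rightHom]
  exact Subgroup.finiteIndex_ker _

theorem residuallyFinite_semidirectProduct [Group.ResiduallyFinite N] :
    Group.ResiduallyFinite (N ⋊[φ] P) :=
  have := finiteIndex_range_inl (φ := φ)
  have := residuallyFinite_of_injective
    (MonoidHom.ofInjective (SemidirectProduct.inl_injective (φ := φ))).symm.toMonoidHom
    (MulEquiv.injective _)
  residuallyFinite_of_finiteIndex (SemidirectProduct.inl : N →* N ⋊[φ] P).range

theorem ContainsNonabelianFree.of_semidirectProduct (h : ContainsNonabelianFree (N ⋊[φ] P)) :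
    ContainsNonabelianFree N :=
  have := finiteIndex_range_inl (φ := φ)
  (h.of_finiteIndex (SemidirectProduct.inl : N →* N ⋊[φ] P).range).map
    (MonoidHom.ofInjective SemidirectProduct.inl_injective).symm.toMonoidHom
    (MulEquiv.injective _)

end SemidirectProduct

section Embedding

theorem exists_pow_eq_prod (A : Type*) [CommGroup A] [Group.FG A] :
    ∃ (n : ℕ) (J : Type) (_ : Fintype J) (π : J → A →* Multiplicative ℤ)
      (f : J → Multiplicative ℤ →* A), n ≠ 0 ∧ ∀ a, a ^ n = ∏ j, f j (π j a) := by
  classical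
  obtain ⟨I, J, _, _, p, hp, e, ⟨E⟩⟩ := CommGroup.equiv_free_prod_prod_multiplicative_zmod A
  have (i : I) : NeZero (p i ^ e i) := ⟨pow_ne_zero _ (hp i).ne_zero⟩
  obtain ⟨n, hn, htorsion⟩ :
      ∃ n ≠ 0, ∀ t : (i : I) → Multiplicative (ZMod (p i ^ e i)), t ^ n = 1 :=
    ⟨Nat.card _, Nat.card_pos.ne', fun _ ↦ pow_card_eq_one'⟩
  let ε : (J → Multiplicative ℤ) →* A := E.symm.toMonoidHom.comp (MonoidHom.inl _ _)
  have hε (a : A) : a ^ n = ε ((E a).1 ^ n) :=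
    E.injective (Prod.ext (by simp [ε]) (by simp [ε, htorsion]))
  refine ⟨n, J, inferInstance, fun j ↦ (Pi.evalMonoidHom _ j).comp
    ((MonoidHom.fst _ _).comp E.toMonoidHom), fun j ↦ (powMonoidHom n).comp
      (ε.comp (MonoidHom.mulSingle (fun _ ↦ Multiplicative ℤ) j)), hn, fun a ↦ ?_⟩
  rw [hε, map_pow, ← Finset.univ_prod_mulSingle (E a).1, map_prod, ← Finset.prod_pow]
  rfl

theorem exists_injective_range_le_ker_prodAbelianization (G : Type*) [Group G] [Group.FG G]
    (m : ℕ) : ∃ (ι : Type) (_ : Fintype ι) (Ψ : G →* ι → G), m ≤ Nat.card ι ∧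
      Function.Injective Ψ ∧ Ψ.range ≤ (prodAbelianization ι G).ker := by
  have := Group.fg_of_surjective (f := (Abelianization.of : G →* _)) QuotientGroup.mk_surjective
  obtain ⟨n, J, _, π, f, hn, hpow⟩ := exists_pow_eq_prod (Abelianization G)
  choose x hx using fun j ↦ QuotientGroup.mk_surjective (f j (.ofAdd 1))
  have hlift (j : J) (y : Multiplicative ℤ) : Abelianization.of (zpowersHom G (x j) y) = f j y :=
    DFunLike.congr_fun (MonoidHom.ext_mint (f := Abelianization.of.comp (zpowersHom G (x j)))
      (by simpa using! hx j)) y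
  let ψ (j : J) : G →* G := (zpowersHom G (x j)).comp ((π j)⁻¹.comp Abelianization.of)
  let Ψ : G →* Fin n ⊕ J ⊕ Fin m → G :=
    MonoidHom.pi (Sum.elim (fun _ ↦ MonoidHom.id G) (Sum.elim ψ 1))
  refine ⟨_, inferInstance, Ψ, by simp; omega, fun g h hgh ↦ ?_, ?_⟩
  · exact congrFun hgh (Sum.inl ⟨0, Nat.pos_of_ne_zero hn⟩)
  · rintro _ ⟨g, rfl⟩
    rw [MonoidHom.mem_ker, prodAbelianization, MonoidHom.finsetProd_apply,
      Fintype.prod_sum_type, Fintype.prod_sum_type]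
    change (∏ _ : Fin n, Abelianization.of g) *
      ((∏ j, Abelianization.of (zpowersHom G (x j) (π j (.of g))⁻¹)) *
        ∏ _ : Fin m, Abelianization.of 1) = 1
    simp only [Finset.prod_const, Finset.card_univ, Fintype.card_fin, hpow, hlift, map_inv,
      Finset.prod_inv_distrib, map_one, one_pow, mul_one, mul_inv_cancel]

end Embedding

theorem exists_injective_fg_isPerfect (H : Type u) [Group H] [Group.FG H] :
    ∃ (Γ : Type u) (_ : Group Γ) (φ : H →* Γ), Function.Injective φ ∧ Group.FG Γ ∧
      Group.IsPerfect Γ ∧ (Group.ResiduallyFinite H → Group.ResiduallyFinite Γ) ∧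
      (IsMulTorsion H → IsMulTorsion Γ) ∧
      (ContainsNonabelianFree Γ → ContainsNonabelianFree H) := by
  classical
  obtain ⟨ι, _, Ψ, hcard, hinj, hker⟩ := exists_injective_range_le_ker_prodAbelianization H 5
  have h3 : 3 ≤ ENat.card ι := by
    rw [ENat.card_eq_coe_natCard]; exact_mod_cast (by omega : 3 ≤ Nat.card ι)
  have := alternatingGroup.isMultiplyPretransitive ι
  have : MulAction.IsMultiplyPretransitive (alternatingGroup ι) ι 2 :=
    MulAction.isMultiplyPretransitive_of_le (n := Nat.card ι - 2) (by omega) (by omega)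
  have : Group.IsPerfect (alternatingGroup ι) :=
    Group.isPerfect_def.mpr (commutator_alternatingGroup_eq_top hcard)
  refine ⟨(augmentation ι H (alternatingGroup ι)).ker, inferInstance,
    (SemidirectProduct.inl.comp Ψ).codRestrict _
      fun h ↦ inl_mem_augmentation_ker (hker ⟨h, rfl⟩), ?_, augmentation_ker_fg h3,
    augmentation_ker_isPerfect h3, ?_, ?_, ?_⟩
  · exact (MonoidHom.injective_codRestrict _ _ _).mpr (SemidirectProduct.inl_injective.comp hinj)
  · intro _
    have := residuallyFinite_pi (G := H) ι
    have := residuallyFinite_semidirectProduct (N := ι → H) (P := alternatingGroup ι)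
      (φ := mulAutArrow)
    infer_instance
  · exact fun h ↦ (isMulTorsion_semidirectProduct (fun f : ι → H ↦ .pi fun i ↦ h (f i))
      isMulTorsion_of_finite).subgroup _
  · exact fun h ↦ (h.map (Subgroup.subtype _) Subtype.val_injective).of_semidirectProduct.of_pi

section RootedTree

variable {X : Type*}

/-- The automorphism of the rooted tree `List X` which permutes the first letter of each word. -/
def rooted : Equiv.Perm X →* Equiv.Perm (List X) :=
  MonoidHom.toHomPerm
    { toFun σ
        | [] => []
        | x :: w => σ x :: w
      map_one' := funext fun w ↦ by cases w <;> rfl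
      map_mul' _ _ := funext fun w ↦ by cases w <;> rfl }

/-- The automorphism of the rooted tree `List X` which fixes the first level and acts by `S x` on
the subtree of words with first letter `x`. -/
def branch : (X → Equiv.Perm (List X)) →* Equiv.Perm (List X) :=
  MonoidHom.toHomPerm
    { toFun S
        | [] => []
        | x :: w => x :: S x w
      map_one' := funext fun w ↦ by cases w <;> rfl
      map_mul' _ _ := funext fun w ↦ by cases w <;> rfl }

theorem rooted_mul_branch (σ : Equiv.Perm X) (S : X → Equiv.Perm (List X)) :
    rooted σ * branch S = branch (S ∘ σ.symm) * rooted σ := by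
  ext1 w
  cases w with
  | nil => rfl
  | cons x w => exact congrArg (fun y ↦ σ x :: S y w) (σ.symm_apply_apply x).symm

variable [DecidableEq X]

/-- The self-map of words underlying `directed x₀ S`. -/
def directedFun (x₀ : X) (S : X → Equiv.Perm (List X)) : List X → List X
  | [] => []
  | x :: w => x :: if x = x₀ then directedFun x₀ S w else S x w

theorem directedFun_one (x₀ : X) (w : List X) : directedFun x₀ 1 w = w := by
  induction w with
  | nil => rfl
  | cons x w ih => rw [directedFun, ih, Pi.one_apply, Equiv.Perm.one_apply, ite_self]

theorem directedFun_mul (x₀ : X) (S S' : X → Equiv.Perm (List X)) (w : List X) :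
    directedFun x₀ (S * S') w = directedFun x₀ S (directedFun x₀ S' w) := by
  induction w with
  | nil => rfl
  | cons x w ih =>
    simp only [directedFun, ih]
    split_ifs <;> rfl

/-- The automorphism of the rooted tree `List X` which fixes the ray `x₀, x₀, …` and acts by `S x`
on each subtree hanging off this ray by a letter `x ≠ x₀`. -/
def directed (x₀ : X) : (X → Equiv.Perm (List X)) →* Equiv.Perm (List X) :=
  MonoidHom.toHomPerm
    { toFun := directedFun x₀
      map_one' := funext (directedFun_one x₀)
      map_mul' S S' := funext (directedFun_mul x₀ S S') }

theorem directed_eq_branch (x₀ : X) (S : X → Equiv.Perm (List X)) :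
    directed x₀ S = branch (Function.update S x₀ (directed x₀ S)) := by
  ext1 w
  cases w with
  | nil => rfl
  | cons x w =>
    refine congrArg (x :: ·) ?_
    rw [Function.update_apply]
    split_ifs <;> rfl

end RootedTree

section GuptaSidki

open List

/-- The rooted automorphism of the ternary tree translating the first letter by `c`. -/
def shift (c : ZMod 3) : Equiv.Perm (List (ZMod 3)) :=
  rooted (Equiv.addRight c)

/-- The directed generator `t = (t, a, a⁻¹)` of the Gupta–Sidki group, where `a` is `shift 1`. -/
def spine : Equiv.Perm (List (ZMod 3)) :=
  directed 0 shift

/-- The Gupta–Sidki `3`-group. -/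
def guptaSidki : Subgroup (Equiv.Perm (List (ZMod 3))) :=
  Subgroup.closure {shift 1, spine}

theorem shift_add (c d : ZMod 3) : shift (c + d) = shift c * shift d := by
  rw [shift, shift, shift, ← map_mul]
  exact congrArg rooted (Equiv.ext fun x ↦
    (congrArg (x + ·) (add_comm c d)).trans (add_assoc x d c).symm)

theorem shift_zero : shift 0 = 1 := by
  rw [shift, ← map_one rooted]
  exact congrArg rooted (Equiv.ext add_zero)

theorem isOfFinOrder_shift (c : ZMod 3) : IsOfFinOrder (shift c) :=
  rooted.isOfFinOrder (isOfFinOrder_of_finite _)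

theorem isOfFinOrder_spine : IsOfFinOrder spine :=
  (directed 0).isOfFinOrder (.pi isOfFinOrder_shift)

/-- The conjugate of `spine` by `shift i`. -/
def spineConj (i : ZMod 3) : Equiv.Perm (List (ZMod 3)) :=
  shift i * spine * (shift i)⁻¹

theorem shift_mul_spine (c : ZMod 3) : shift c * spine = spineConj c * shift c := by
  rw [spineConj, inv_mul_cancel_right]

theorem shift_mul_spineConj (c i : ZMod 3) :
    shift c * spineConj i = spineConj (i + c) * shift c := by
  rw [add_comm, spineConj, spineConj, shift_add]
  group

theorem spineConj_eq_branch (i : ZMod 3) :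
    spineConj i = branch fun x ↦ if x = i then spine else shift (x - i) := by
  rw [spineConj, mul_inv_eq_iff_eq_mul]
  nth_rw 1 [spine]
  rw [directed_eq_branch, shift, rooted_mul_branch]
  congr 2
  ext1 x
  simp only [Function.comp_apply, Function.update_apply, Equiv.addRight_symm, Equiv.coe_addRight,
    ← sub_eq_add_neg, sub_eq_zero]
  rfl

/-- The product of the conjugates of `spine` indexed by the entries of a list. -/
def spineProd (L : List (ZMod 3)) : Equiv.Perm (List (ZMod 3)) :=
  (L.map spineConj).prod

theorem spineProd_cons (i : ZMod 3) (L : List (ZMod 3)) :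
    spineProd (i :: L) = spineConj i * spineProd L := by
  rw [spineProd, map_cons, prod_cons, spineProd]

theorem spineProd_append (L M : List (ZMod 3)) :
    spineProd (L ++ M) = spineProd L * spineProd M := by
  simp only [spineProd, map_append, prod_append]

theorem spineProd_singleton (i : ZMod 3) : spineProd [i] = spineConj i := by
  simp only [spineProd, map_singleton, prod_singleton]

theorem shift_mul_spineProd (c : ZMod 3) (L : List (ZMod 3)) :
    shift c * spineProd L = spineProd (L.map (· + c)) * shift c := by
  induction L with
  | nil => exact (mul_one _).trans (one_mul _).symm
  | cons i L ih =>
    rw [map_cons, spineProd_cons, spineProd_cons, ← mul_assoc, shift_mul_spineConj, mul_assoc, ih,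
      mul_assoc]

/-- The action of `spineProd L` on the subtree of words with first letter `x`. -/
def spineProdSection (L : List (ZMod 3)) (x : ZMod 3) : Equiv.Perm (List (ZMod 3)) :=
  (L.map fun i ↦ if x = i then spine else shift (x - i)).prod

theorem spineProd_eq_branch (L : List (ZMod 3)) : spineProd L = branch (spineProdSection L) := by
  induction L with
  | nil => exact (map_one branch).symm
  | cons i L ih =>
    rw [spineProd_cons, ih, spineConj_eq_branch, ← map_mul]
    rfl

theorem exists_shift_mul_spineProdSection_eq (L : List (ZMod 3)) (x c : ZMod 3) :
    ∃ M : List (ZMod 3), M.length = L.count x ∧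
      shift c * spineProdSection L x = spineProd M * shift (c + (L.map (x - ·)).sum) := by
  induction L generalizing c with
  | nil => exact ⟨[], rfl, by simp [spineProdSection, spineProd]⟩
  | cons i L ih =>
    have hcons : spineProdSection (i :: L) x =
      (if x = i then spine else shift (x - i)) * spineProdSection L x := rfl
    rw [hcons, map_cons, sum_cons]
    obtain rfl | hxi := eq_or_ne x i
    · obtain ⟨M, hlen, hM⟩ := ih c
      refine ⟨c :: M, by rw [length_cons, count_cons_self, hlen], ?_⟩
      rw [if_pos rfl, ← mul_assoc, shift_mul_spine, mul_assoc, hM, spineProd_cons, mul_assoc,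
        sub_self, zero_add]
    · obtain ⟨M, hlen, hM⟩ := ih (c + (x - i))
      refine ⟨M, by rw [count_cons_of_ne hxi.symm, hlen], ?_⟩
      rw [if_neg hxi, ← mul_assoc, ← shift_add, hM, add_assoc]

theorem exists_spineProdSection_eq (L : List (ZMod 3)) (x : ZMod 3) :
    ∃ M : List (ZMod 3), M.length = L.count x ∧
      spineProdSection L x = spineProd M * shift (L.map (x - ·)).sum := by
  simpa only [shift_zero, one_mul, zero_add] using exists_shift_mul_spineProdSection_eq L x 0

theorem isOfFinOrder_spineProd {L : List (ZMod 3)}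
    (h : ∀ M : List (ZMod 3), M.length < L.length → ∀ s, IsOfFinOrder (spineProd M * shift s)) :
    IsOfFinOrder (spineProd L) := by
  by_cases hconst : ∃ i, ∀ j ∈ L, i = j
  · obtain ⟨i, hi⟩ := hconst
    have hconj : IsOfFinOrder (spineConj i) :=
      (MulAut.conj (shift i)).toMonoidHom.isOfFinOrder isOfFinOrder_spine
    rw [eq_replicate_of_mem fun j hj ↦ (hi j hj).symm, spineProd, map_replicate, prod_replicate]
    exact hconj.pow
  · rw [spineProd_eq_branch]
    refine branch.isOfFinOrder (.pi fun x ↦ ?_)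
    obtain ⟨M, hlen, hM⟩ := exists_spineProdSection_eq L x
    rw [hM]
    refine h M (hlen ▸ count_le_length.lt_of_ne fun hx ↦ hconst ⟨x, count_eq_length.mp hx⟩) _

theorem count_append_map_add {s : ZMod 3} (hs : s ≠ 0) (L : List (ZMod 3)) (x : ZMod 3) :
    (L ++ L.map (· + s) ++ L.map (· + (s + s))).count x = L.length := by
  have hletter : ∀ s i x : ZMod 3, s ≠ 0 → (if i = x then 1 else 0) +
      (if i + s = x then 1 else 0) + (if i + (s + s) = x then 1 else 0) = 1 := by decide
  induction L with
  | nil => rfl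
  | cons i L ih =>
    have := hletter s i x hs
    simp only [map_cons, count_append, count_cons, length_cons, beq_iff_eq] at ih ⊢
    omega

theorem sum_map_sub_append_map_add (s : ZMod 3) (L : List (ZMod 3)) (x : ZMod 3) :
    ((L ++ L.map (· + s) ++ L.map (· + (s + s))).map (x - ·)).sum = 0 := by
  have hletter : ∀ s i x : ZMod 3, x - i + (x - (i + s)) + (x - (i + (s + s))) = 0 := by decide
  induction L with
  | nil => rfl
  | cons i L ih =>
    have := hletter s i x
    simp only [map_cons, map_append, sum_append, sum_cons] at ih ⊢
    linear_combination ih + this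

theorem spineProd_mul_shift_pow_three (L : List (ZMod 3)) (s : ZMod 3) :
    (spineProd L * shift s) ^ 3 = spineProd (L ++ L.map (· + s) ++ L.map (· + (s + s))) := by
  have hs : s + s + s = 0 := by revert s; decide
  calc (spineProd L * shift s) ^ 3
      = spineProd L * (shift s * spineProd L) * (shift s * (spineProd L * shift s)) := by
        simp only [pow_succ, pow_zero, one_mul, mul_assoc]
    _ = spineProd L * spineProd (L.map (· + s)) * (shift (s + s) * spineProd L) * shift s := by
        rw [shift_mul_spineProd, shift_add]
        simp only [mul_assoc]
    _ = spineProd L * spineProd (L.map (· + s)) * spineProd (L.map (· + (s + s))) *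
          shift (s + s + s) := by
        simp only [shift_mul_spineProd, shift_add (s + s) s, mul_assoc]
    _ = spineProd (L ++ L.map (· + s) ++ L.map (· + (s + s))) := by
        rw [hs, shift_zero, mul_one, spineProd_append, spineProd_append]

theorem isOfFinOrder_spineProd_mul_shift (L : List (ZMod 3)) (s : ZMod 3) :
    IsOfFinOrder (spineProd L * shift s) := by
  induction hn : L.length using Nat.strong_induction_on generalizing L s with
  | h n ih =>
  have hprod (M : List (ZMod 3)) (hM : M.length = n) : IsOfFinOrder (spineProd M) :=
    isOfFinOrder_spineProd fun M' hM' s ↦ ih _ (hM ▸ hM') M' s rfl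
  obtain rfl | hs := eq_or_ne s 0
  · rw [shift_zero, mul_one]
    exact hprod L hn
  -- The cube fixes the first level, and as each index occurs `n` times in it, its sections are
  -- products of `n` conjugates of `spine` without a rooted factor, as in the previous case.
  · refine IsOfFinOrder.of_pow (n := 3) ?_ three_ne_zero
    rw [spineProd_mul_shift_pow_three, spineProd_eq_branch]
    refine branch.isOfFinOrder (.pi fun x ↦ ?_)
    obtain ⟨M, hlen, hM⟩ := exists_spineProdSection_eq
      (L ++ L.map (· + s) ++ L.map (· + (s + s))) x
    rw [hM, sum_map_sub_append_map_add, shift_zero, mul_one]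
    exact hprod M (by rw [hlen, count_append_map_add hs, hn])

theorem exists_eq_spineProd_mul_shift {g : Equiv.Perm (List (ZMod 3))} (hg : g ∈ guptaSidki) :
    ∃ L s, g = spineProd L * shift s := by
  have hfin : ∀ g ∈ ({shift 1, spine} : Set _), IsOfFinOrder g := by
    rintro _ (rfl | rfl)
    exacts [isOfFinOrder_shift 1, isOfFinOrder_spine]
  rw [guptaSidki, ← Subgroup.mem_toSubmonoid,
    Subgroup.closure_toSubmonoid_of_isOfFinOrder hfin] at hg
  induction hg using Submonoid.closure_induction_right with
  | one => exact ⟨[], 0, by rw [shift_zero, mul_one]; rfl⟩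
  | mul_right g _ x hx ih =>
    obtain ⟨L, s, rfl⟩ := ih
    obtain rfl | rfl := hx
    · exact ⟨L, s + 1, by rw [shift_add, mul_assoc]⟩
    · exact ⟨L ++ [s], s, by
        rw [mul_assoc, shift_mul_spine, spineProd_append, spineProd_singleton, mul_assoc]⟩

theorem guptaSidki_isMulTorsion : IsMulTorsion guptaSidki := by
  rintro ⟨g, hg⟩
  obtain ⟨L, s, rfl⟩ := exists_eq_spineProd_mul_shift hg
  exact Submonoid.isOfFinOrder_coe.mp (isOfFinOrder_spineProd_mul_shift L s)

theorem guptaSidki_fg : Group.FG guptaSidki :=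
  (Group.fg_iff_subgroup_fg _).mpr ((Subgroup.fg_iff _).mpr ⟨_, rfl, Set.toFinite _⟩)

theorem shift_mem_guptaSidki (c : ZMod 3) : shift c ∈ guptaSidki := by
  have h1 : shift 1 ∈ guptaSidki := Subgroup.subset_closure (Set.mem_insert _ _)
  fin_cases c
  · exact shift_zero ▸ one_mem guptaSidki
  · exact h1
  · exact shift_add 1 1 ▸ mul_mem h1 h1

theorem spineConj_mem_guptaSidki (i : ZMod 3) : spineConj i ∈ guptaSidki :=
  mul_mem (mul_mem (shift_mem_guptaSidki i) (Subgroup.subset_closure (Set.mem_insert_of_mem _ rfl)))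
    (inv_mem (shift_mem_guptaSidki i))

theorem exists_mem_guptaSidki_apply_zero_cons {g : Equiv.Perm (List (ZMod 3))}
    (hg : g ∈ guptaSidki) : ∃ h ∈ guptaSidki, ∀ w, h (0 :: w) = 0 :: g w := by
  induction hg using Subgroup.closure_induction with
  | mem g hg =>
    obtain rfl | rfl := hg
    · exact ⟨spineConj (-1), spineConj_mem_guptaSidki _, fun w ↦ by rw [spineConj_eq_branch]; rfl⟩
    · exact ⟨spineConj 0, spineConj_mem_guptaSidki _, fun w ↦ by rw [spineConj_eq_branch]; rfl⟩
  | one => exact ⟨1, one_mem _, fun _ ↦ rfl⟩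
  | mul g₁ g₂ _ _ ih₁ ih₂ =>
    obtain ⟨h₁, hmem₁, hh₁⟩ := ih₁
    obtain ⟨h₂, hmem₂, hh₂⟩ := ih₂
    exact ⟨h₁ * h₂, mul_mem hmem₁ hmem₂, fun w ↦ by
      rw [Equiv.Perm.mul_apply, hh₂, hh₁, Equiv.Perm.mul_apply]⟩
  | inv g _ ih =>
    obtain ⟨h, hmem, hh⟩ := ih
    exact ⟨h⁻¹, inv_mem hmem, fun w ↦ by
      rw [Equiv.Perm.inv_eq_iff_eq, hh, Equiv.Perm.coe_inv, Equiv.apply_symm_apply]⟩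

theorem guptaSidki_infinite : Infinite guptaSidki := by
  choose lift hmem hlift using fun g : guptaSidki ↦ exists_mem_guptaSidki_apply_zero_cons g.2
  let F (g : guptaSidki) : guptaSidki := ⟨lift g, hmem g⟩
  have hinj : Function.Injective F := fun g h hgh ↦ Subtype.ext <| Equiv.ext fun w ↦
    cons_injective <| by rw [← hlift, ← hlift, show lift g = lift h from congrArg Subtype.val hgh]
  have hsurj : ¬Function.Surjective F := fun hF ↦ by
    obtain ⟨g, hg⟩ := hF ⟨shift 1, shift_mem_guptaSidki 1⟩
    have happly : shift 1 [0] = 0 :: g.1 [] :=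
      (DFunLike.congr_fun (congrArg Subtype.val hg) [0]).symm.trans (hlift g [])
    exact absurd (head_eq_of_cons_eq happly) (by decide)
  by_contra hfin
  have := not_infinite_iff_finite.mp hfin
  exact hsurj (Finite.injective_iff_surjective.mp hinj)

theorem length_shift_apply (c : ZMod 3) (w : List (ZMod 3)) : (shift c w).length = w.length := by
  cases w <;> rfl

theorem length_spine_apply (w : List (ZMod 3)) : (spine w).length = w.length := by
  induction w with
  | nil => rfl
  | cons x w ih =>
    change (x :: if x = 0 then spine w else shift x w).length = _
    split_ifs
    · rw [length_cons, length_cons, ih]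
    · rw [length_cons, length_cons, length_shift_apply]

theorem length_apply_of_mem_guptaSidki {g : Equiv.Perm (List (ZMod 3))} (hg : g ∈ guptaSidki)
    (w : List (ZMod 3)) : (g w).length = w.length := by
  induction hg using Subgroup.closure_induction generalizing w with
  | mem g hg =>
    obtain rfl | rfl := hg
    exacts [length_shift_apply 1 w, length_spine_apply w]
  | one => rfl
  | mul g h _ _ ihg ihh => rw [Equiv.Perm.mul_apply, ihg, ihh]
  | inv g _ ih => rw [← ih (g⁻¹ w), Equiv.Perm.coe_inv, Equiv.apply_symm_apply]

theorem guptaSidki_residuallyFinite : Group.ResiduallyFinite guptaSidki := by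
  refine residuallyFinite_of_finite_orbits fun w : List (ZMod 3) ↦
    (finite_length_eq (ZMod 3) w.length).subset ?_
  rintro _ ⟨g, rfl⟩
  exact length_apply_of_mem_guptaSidki g.2 w

end GuptaSidki

theorem embeds_into_fg_perfect_group_general {G : Type u} [Group G] (hfg : Group.FG G) :
    ∃ (Γ : Type u) (_ : Group Γ) (φ : G →* Γ),
      Function.Injective φ ∧ Group.FG Γ ∧ commutator Γ = ⊤ ∧ Infinite Γ ∧
      (ResiduallyFinite G → ResiduallyFinite Γ) ∧ (IsMulTorsion G → IsMulTorsion Γ) ∧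
      (¬ ContainsNonabelianFree G → ¬ ContainsNonabelianFree Γ) := by
  have := guptaSidki_fg
  have := guptaSidki_infinite
  have := guptaSidki_residuallyFinite
  obtain ⟨Γ, _, φ, hφ, hfgΓ, hperf, hrf, htors, hfree⟩ :=
    exists_injective_fg_isPerfect (G × guptaSidki)
  refine ⟨Γ, inferInstance, φ.comp (MonoidHom.inl G _), hφ.comp fun _ _ ↦ congrArg Prod.fst, hfgΓ,
    Group.isPerfect_def.mp hperf, .of_injective φ hφ, fun hG ↦ ?_, fun hG ↦ htors fun x ↦ ?_,
    fun hG hΓ ↦ (hfree hΓ).of_prod.elim hG fun h ↦ h.not_isMulTorsion guptaSidki_isMulTorsion⟩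
  · have := residuallyFinite_iff.mp hG
    exact residuallyFinite_iff.mpr (hrf inferInstance)
  · exact (hG x.1).prod_mk (guptaSidki_isMulTorsion x.2)

/-- Every finitely generated, residually finite group `G` embeds into a finitely
generated, perfect, infinite, residually finite group `Γ` such that torsion and the
absence of non-abelian free subgroups are preserved. -/
theorem embeds_into_fg_perfect_group {G : Type u} [Group G]
    (hfg : Group.FG G) (hrf : ResiduallyFinite G) :
    ∃ (Γ : Type u) (_ : Group Γ) (φ : G →* Γ),
      Function.Injective φ ∧
      Group.FG Γ ∧
      commutator Γ = ⊤ ∧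
      Infinite Γ ∧
      ResiduallyFinite Γ ∧
      (Monoid.IsTorsion G → Monoid.IsTorsion Γ) ∧
      (¬ ContainsNonabelianFree G → ¬ ContainsNonabelianFree Γ) := by
  obtain ⟨Γ, _, φ, hφ, hfgΓ, hperfect, hinf, hrfΓ, h⟩ := embeds_into_fg_perfect_group_general hfg
  exact ⟨Γ, _, φ, hφ, hfgΓ, hperfect, hinf, hrfΓ hrf, h⟩
end

section
/- Let r be a positive integer and let w be an element of the free group F_r on r generators. If G is a finitely generated, residually finite group that satisfies the law w up to powers, then G embeds into a finitely generated, perfect, infinite group Γ (i.e., there is an injective group homomorphism G → Γ) that satisfies the law w up to powers. (Part (4) of Theorem 1.1, stated without the branch-group conclusion.) -/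
/-- A group `H` satisfies the law `w ∈ F_r` if every homomorphism `F_r →* H`
sends `w` to the identity. -/
def SatisfiesLaw {r : ℕ} (w : FreeGroup (Fin r)) (H : Type*) [Group H] : Prop :=
  ∀ f : FreeGroup (Fin r) →* H, f w = 1

/-- A group `Γ` satisfies the law `w ∈ F_r` up to powers if for all
`γ₁, …, γ_r ∈ Γ` there are positive integers `t₁, …, t_r` such that
`⟨γ₁^{t₁}, …, γ_r^{t_r}⟩` satisfies the law `w`. -/
def SatisfiesLawUpToPowers {r : ℕ} (w : FreeGroup (Fin r)) (Γ : Type*) [Group Γ] : Prop :=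
  ∀ γ : Fin r → Γ, ∃ t : Fin r → ℕ, (∀ i, 0 < t i) ∧
    SatisfiesLaw w (Subgroup.closure (Set.range fun i => γ i ^ t i))

/-!
Let `T` be a perfect, finitely generated, infinite torsion group. In the unrestricted wreath product
`G ≀ᵣ T`, let `Γ` be generated by the conjugates of `T` by `1` and by finitely many functions
`f : T → G` with finitely many values. It is perfect and finitely generated because `T` is. It
satisfies `w` up to powers because `G` does: as `T` is torsion, suitable powers of elements of `Γ`
lie in the base group, and these functions with finitely many values can be treated value by value.

The commutators of `T` with the conjugating functions are the quotients of `f` by its left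
translates. Along an injective ray `x 0 = 1, x 1, …` of the Cayley graph of `T`, let `c s` be the
indicator of the points from which the ray proceeds by `s`. The sum over the generators `s` of `c s`
minus its translate by `s` telescopes to the indicator of `1`. With the functions
`y ↦ g ^ c s y` for `g` in a finite generating set of `G`, the group `Γ` therefore contains a copy
of `G` in the base group.

The same construction provides `T`: take a finite perfect group (the alternating group on five
letters) for `T` and an infinite finitely generated torsion group (the Gupta–Sidki group) for `G`,
and conjugate by functions supported at `1`.
-/
section Laws

variable {r : ℕ} {w : FreeGroup (Fin r)} {D H K Γ N Q X : Type*}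
variable [Group D] [Group H] [Group K] [Group Γ] [Group N] [Group Q]

theorem SatisfiesLaw.of_separating {ι : Type*} {E : ι → Type*} [∀ i, Group (E i)]
    (hE : ∀ i, SatisfiesLaw w (E i)) (φ : ∀ i, H →* E i) (hφ : ∀ h, (∀ i, φ i h = 1) → h = 1) :
    SatisfiesLaw w H :=
  fun f => hφ _ fun i => hE i ((φ i).comp f)

theorem SatisfiesLaw.of_injective (hK : SatisfiesLaw w K) {φ : H →* K}
    (hφ : Function.Injective φ) : SatisfiesLaw w H :=
  .of_separating (fun _ : Unit => hK) (fun _ => φ) fun _ h => (map_eq_one_iff φ hφ).1 (h ())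

theorem SatisfiesLaw.of_surjective (hH : SatisfiesLaw w H) {φ : H →* K}
    (hφ : Function.Surjective φ) : SatisfiesLaw w K := fun f => by
  choose lift hlift using hφ
  have hf : f = φ.comp (FreeGroup.lift fun i => lift (f (.of i))) :=
    FreeGroup.ext_hom _ _ fun i => by
      simp only [MonoidHom.comp_apply, FreeGroup.lift_apply_of, hlift]
  rw [hf, MonoidHom.comp_apply, hH, map_one]

theorem SatisfiesLaw.subgroup_map {P : Subgroup H} (hP : SatisfiesLaw w P) (φ : H →* K) :
    SatisfiesLaw w (P.map φ) :=
  hP.of_surjective (φ.subgroupMap_surjective P)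

theorem SatisfiesLaw.mono {P P' : Subgroup H} (hP' : SatisfiesLaw w P') (hle : P ≤ P') :
    SatisfiesLaw w P :=
  hP'.of_injective (Subgroup.inclusion_injective hle)

theorem map_closure_range_pow (φ : H →* K) (γ : Fin r → H) (t : Fin r → ℕ) :
    (Subgroup.closure (Set.range fun i => γ i ^ t i)).map φ =
      Subgroup.closure (Set.range fun i => φ (γ i) ^ t i) := by
  simp only [MonoidHom.map_closure, ← Set.range_comp, Function.comp_def, map_pow]

theorem closure_range_pow_anti (γ : Fin r → H) {s t : Fin r → ℕ} (hst : ∀ i, s i ∣ t i) :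
    Subgroup.closure (Set.range fun i => γ i ^ t i) ≤
      Subgroup.closure (Set.range fun i => γ i ^ s i) := by
  rw [Subgroup.closure_le]
  rintro _ ⟨i, rfl⟩
  obtain ⟨k, hk⟩ := hst i
  simp only [hk, pow_mul]
  exact pow_mem (Subgroup.subset_closure (Set.mem_range_self i)) k

theorem SatisfiesLawUpToPowers.of_injective (hK : SatisfiesLawUpToPowers w K) {φ : H →* K}
    (hφ : Function.Injective φ) : SatisfiesLawUpToPowers w H := fun γ => by
  obtain ⟨t, ht, hlaw⟩ := hK fun i => φ (γ i)
  rw [← map_closure_range_pow] at hlaw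
  refine ⟨t, ht, hlaw.of_injective (φ := (Subgroup.equivMapOfInjective _ φ hφ).toMonoidHom) ?_⟩
  exact (Subgroup.equivMapOfInjective _ φ hφ).injective

theorem SatisfiesLawUpToPowers.of_ker_le_range (hN : SatisfiesLawUpToPowers w N)
    (hQ : IsMulTorsion Q) {ι : N →* Γ} {π : Γ →* Q} (hπ : π.ker ≤ ι.range) :
    SatisfiesLawUpToPowers w Γ := fun γ => by
  choose k hk hγk using fun i => (hQ (π (γ i))).exists_pow_eq_one
  have hker : ∀ i, γ i ^ k i ∈ ι.range := fun i => hπ (by rw [MonoidHom.mem_ker, map_pow, hγk])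
  choose δ hδ using hker
  obtain ⟨t, ht, hlaw⟩ := hN δ
  refine ⟨fun i => k i * t i, fun i => Nat.mul_pos (hk i) (ht i), ?_⟩
  have hpow : (fun i => γ i ^ (k i * t i)) = fun i => ι (δ i) ^ t i :=
    funext fun i => by rw [hδ, pow_mul]
  rw [hpow, ← map_closure_range_pow]
  exact hlaw.subgroup_map ι

/-- The group of functions `X → D` taking only finitely many values. -/
def finiteRangeSubgroup (X D : Type*) [Group D] : Subgroup (X → D) where
  carrier := {f | (Set.range f).Finite}
  one_mem' := Set.finite_range_const
  mul_mem' hf hg := (hf.image2 (· * ·) hg).subset <| Set.range_subset_iff.2 fun x =>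
    Set.mem_image2_of_mem ⟨x, rfl⟩ ⟨x, rfl⟩
  inv_mem' hf := (hf.image (·⁻¹)).subset <| Set.range_subset_iff.2 fun x =>
    Set.mem_image_of_mem _ ⟨x, rfl⟩

/-- The exponents are obtained by multiplying those of the finitely many tuples of values. -/
theorem SatisfiesLawUpToPowers.pi_finiteRange (hD : SatisfiesLawUpToPowers w D) :
    SatisfiesLawUpToPowers w (finiteRangeSubgroup X D) := fun γ => by
  choose t ht hlaw using hD
  have hvalues : (Set.range fun x i => (γ i : X → D) x).Finite :=
    (Set.Finite.pi' fun i => (γ i).2).subset <| by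
      rintro _ ⟨x, rfl⟩ i
      exact ⟨x, rfl⟩
  set V := hvalues.toFinset
  refine ⟨fun i => ∏ v ∈ V, t v i, fun i => Finset.prod_pos fun v _ => ht v i, ?_⟩
  let evalAt (x : X) : finiteRangeSubgroup X D →* D :=
    (Pi.evalMonoidHom (fun _ => D) x).comp (Subgroup.subtype _)
  refine .of_separating (fun x => ?_) (fun x => (evalAt x).subgroupMap _) fun g hg =>
    Subtype.ext <| Subtype.ext <| funext fun x => congrArg Subtype.val (hg x)
  rw [map_closure_range_pow]
  exact (hlaw fun i => (γ i : X → D) x).mono <| closure_range_pow_anti _ fun i =>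
    Finset.dvd_prod_of_mem (t · i) (hvalues.mem_toFinset.2 ⟨x, rfl⟩)

end Laws

open RegularWreathProduct commutatorElement

section WreathProduct

theorem isPerfect_iSup {ι G : Type*} [Group G] {H : ι → Subgroup G}
    (hH : ∀ i, Group.IsPerfect (H i)) : Group.IsPerfect ↥(⨆ i, H i) := by
  rw [Subgroup.isPerfect_iff]
  refine le_antisymm (Subgroup.commutator_le_self _) (iSup_le fun i => ?_)
  rw [← Subgroup.isPerfect_iff.1 (hH i)]
  exact Subgroup.commutator_mono (le_iSup H i) (le_iSup H i)

variable {D Q : Type*} [Group D] [Group Q]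

/-- The embedding of the base group `Q → D` into the (unrestricted) wreath product `D ≀ᵣ Q`. -/
def wreathBase : (Q → D) →* D ≀ᵣ Q where
  toFun f := ⟨f, 1⟩
  map_one' := rfl
  map_mul' f g := by ext <;> simp

@[simp] theorem left_wreathBase (f : Q → D) : (wreathBase f).left = f := rfl

@[simp] theorem right_wreathBase (f : Q → D) : (wreathBase f).right = 1 := rfl

theorem wreathBase_injective : Function.Injective (wreathBase : (Q → D) → D ≀ᵣ Q) :=
  fun _ _ h => congrArg left h

theorem ker_rightHom_eq_range_wreathBase :
    (rightHom : D ≀ᵣ Q →* Q).ker = (wreathBase : (Q → D) →* D ≀ᵣ Q).range := by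
  ext g
  refine ⟨fun hg => ⟨g.left, RegularWreathProduct.ext rfl hg.symm⟩, ?_⟩
  rintro ⟨f, rfl⟩
  rfl

theorem wreathBase_commutator_inl (f : Q → D) (q : Q) :
    ⁅wreathBase f, (inl q : D ≀ᵣ Q)⁆ = wreathBase (f * fun x => (f (q⁻¹ * x))⁻¹) := by
  ext <;> simp [commutatorElement_def]

theorem comp_mem_finiteRangeSubgroup {X Y : Type*} {f : X → D} (hf : f ∈ finiteRangeSubgroup X D)
    (φ : Y → X) : f ∘ φ ∈ finiteRangeSubgroup Y D :=
  hf.subset (Set.range_comp_subset_range φ f)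

variable (D Q) in
/-- The elements of `D ≀ᵣ Q` whose base component takes only finitely many values. -/
def wreathFiniteRange : Subgroup (D ≀ᵣ Q) where
  carrier := {g | g.left ∈ finiteRangeSubgroup Q D}
  one_mem' := one_mem (finiteRangeSubgroup Q D)
  mul_mem' hg hh := mul_mem (S := Subgroup (Q → D)) hg (comp_mem_finiteRangeSubgroup hh _)
  inv_mem' hg := comp_mem_finiteRangeSubgroup (inv_mem (S := Subgroup (Q → D)) hg) _

theorem SatisfiesLawUpToPowers.wreath_finiteRange {r : ℕ} {w : FreeGroup (Fin r)}
    (hD : SatisfiesLawUpToPowers w D) (hQ : IsMulTorsion Q) :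
    SatisfiesLawUpToPowers w (wreathFiniteRange D Q) := by
  let ι : finiteRangeSubgroup Q D →* wreathFiniteRange D Q :=
    (wreathBase.comp (finiteRangeSubgroup Q D).subtype).codRestrict _ fun f => f.2
  refine hD.pi_finiteRange.of_ker_le_range (ι := ι)
    (π := rightHom.comp (Subgroup.subtype _)) hQ fun g hg => ?_
  exact ⟨⟨g.1.left, g.2⟩, Subtype.ext (RegularWreathProduct.ext rfl (Eq.symm hg))⟩

/-- The subgroup of `D ≀ᵣ Q` generated by the conjugates of the top group `Q` by the elements of
`F ⊆ Q → D`. -/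
def topConjugates (F : Set (Q → D)) : Subgroup (D ≀ᵣ Q) :=
  ⨆ f : F, ((MulAut.conj (wreathBase f.1)).toMonoidHom.comp inl).range

variable {F : Set (Q → D)}

theorem conj_inl_mem_topConjugates {f : Q → D} (hf : f ∈ F) (q : Q) :
    wreathBase f * inl q * (wreathBase f)⁻¹ ∈ topConjugates F :=
  Subgroup.mem_iSup_of_mem (⟨f, hf⟩ : F) ⟨q, rfl⟩

theorem inl_mem_topConjugates (h1 : 1 ∈ F) (q : Q) : inl q ∈ topConjugates F := by
  simpa using conj_inl_mem_topConjugates h1 q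

theorem wreathBase_mem_topConjugates (h1 : 1 ∈ F) {f : Q → D} (hf : f ∈ F) (q : Q) :
    wreathBase (f * fun x => (f (q⁻¹ * x))⁻¹) ∈ topConjugates F := by
  rw [← wreathBase_commutator_inl, commutatorElement_def]
  exact mul_mem (conj_inl_mem_topConjugates hf q) (inv_mem (inl_mem_topConjugates h1 q))

theorem topConjugates_fg [Group.FG Q] (hF : F.Finite) : Group.FG (topConjugates F) := by
  have := hF.to_subtype
  exact (Group.fg_iff_subgroup_fg _).2 <| Subgroup.FG.iSup _ fun f =>
    (Group.fg_iff_subgroup_fg _).1 (Group.fg_range _)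

theorem topConjugates_isPerfect [Group.IsPerfect Q] : Group.IsPerfect (topConjugates F) :=
  isPerfect_iSup fun _ => Group.IsPerfect.range _

theorem topConjugates_le_wreathFiniteRange (hF : F ⊆ finiteRangeSubgroup Q D) :
    topConjugates F ≤ wreathFiniteRange D Q := by
  refine iSup_le fun f => ?_
  rintro _ ⟨q, rfl⟩
  have hf : wreathBase f.1 ∈ wreathFiniteRange D Q := hF f.2
  have hq : inl q ∈ wreathFiniteRange D Q := Set.finite_range_const
  exact mul_mem (mul_mem hf hq) (inv_mem hf)

theorem topConjugates_infinite [Infinite Q] (h1 : 1 ∈ F) : Infinite (topConjugates F) :=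
  .of_injective (fun q => (⟨inl q, inl_mem_topConjugates h1 q⟩ : topConjugates F)) fun _ _ h =>
    congrArg (right ·.1) h

end WreathProduct

section Rays

variable {V : Type*} {𝒢 : SimpleGraph V}

/-- The order on the vertices of a connected graph in which `x ≤ y` if some geodesic from the root
`v` to `y` passes through `x`. -/
abbrev geodesicOrder (hconn : 𝒢.Connected) (v : V) : PartialOrder V where
  le x y := 𝒢.dist v y = 𝒢.dist v x + 𝒢.dist x y
  le_refl x := by rw [SimpleGraph.dist_self, add_zero]
  le_trans x y z hxy hyz := by
    have h₁ : 𝒢.dist v z ≤ 𝒢.dist v x + 𝒢.dist x z := hconn.dist_triangle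
    have h₂ : 𝒢.dist x z ≤ 𝒢.dist x y + 𝒢.dist y z := hconn.dist_triangle
    lia
  le_antisymm x y hxy hyx := hconn.dist_eq_zero_iff.1 (by lia)

theorem adj_of_covBy_geodesicOrder {hconn : 𝒢.Connected} {v x y : V}
    (hxy : @CovBy V (geodesicOrder hconn v).toLT x y) : 𝒢.Adj x y := by
  let _ := geodesicOrder hconn v
  obtain ⟨walk, hwalk⟩ := hconn.exists_walk_length_eq_dist x y
  cases walk with
  | nil => exact absurd hxy.lt (lt_irrefl _)
  | @cons _ z _ hadj tail =>
    have hxz : 𝒢.dist x z = 1 := SimpleGraph.dist_eq_one_iff_adj.2 hadj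
    have htail : 𝒢.dist z y ≤ tail.length := SimpleGraph.dist_le tail
    have hlength : tail.length + 1 = 𝒢.dist x y := hwalk
    have hvz : 𝒢.dist v z ≤ 𝒢.dist v x + 𝒢.dist x z := hconn.dist_triangle
    have hvy : 𝒢.dist v y ≤ 𝒢.dist v z + 𝒢.dist z y := hconn.dist_triangle
    have hle : 𝒢.dist v y = 𝒢.dist v x + 𝒢.dist x y := hxy.le
    have hxz_le : x ≤ z := show 𝒢.dist v z = 𝒢.dist v x + 𝒢.dist x z by lia
    have hzy_le : z ≤ y := show 𝒢.dist v y = 𝒢.dist v z + 𝒢.dist z y by lia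
    obtain rfl | rfl := hxy.eq_or_eq hxz_le hzy_le
    · exact absurd hadj 𝒢.irrefl
    · exact hadj

/-- **Kőnig's lemma** for graphs. -/
theorem exists_injective_ray [Infinite V] (hconn : 𝒢.Connected)
    (hfin : ∀ x, (𝒢.neighborSet x).Finite) (v : V) :
    ∃ ray : ℕ → V, ray 0 = v ∧ Function.Injective ray ∧ ∀ n, 𝒢.Adj (ray n) (ray (n + 1)) := by
  let _ := geodesicOrder hconn v
  have hmono : StrictMono (𝒢.dist v) := fun x y hxy => by
    have hle : 𝒢.dist v y = 𝒢.dist v x + 𝒢.dist x y := hxy.le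
    have hpos := hconn.pos_dist_of_ne hxy.ne
    lia
  have := hmono.wellFoundedLT
  have habove : (Set.Ici v).Infinite := by
    rw [Set.eq_univ_of_forall (s := Set.Ici v) fun x =>
      show 𝒢.dist v x = 𝒢.dist v v + 𝒢.dist v x by rw [SimpleGraph.dist_self, zero_add]]
    exact Set.infinite_univ
  obtain ⟨ray, h0, hray⟩ := exists_orderEmbedding_covby_of_forall_covby_finite
    (fun x => (hfin x).subset fun y hxy => adj_of_covBy_geodesicOrder hxy) habove
  exact ⟨ray, h0, ray.injective, fun n => adj_of_covBy_geodesicOrder (hray n)⟩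

variable {T : Type*} [Group T] {S : Set T}

theorem mulCayley_reachable_mul (x : T) {s : T} (hs : s ∈ S) :
    (SimpleGraph.mulCayley S).Reachable x (x * s) := by
  by_cases h : x = x * s
  · rw [← h]
  · exact (SimpleGraph.mulCayley_adj S x (x * s)).2 ⟨h, .inl (by simpa using hs)⟩ |>.reachable

theorem mulCayley_connected (hS : Subgroup.closure S = ⊤) :
    (SimpleGraph.mulCayley S).Connected := by
  have hone (g : T) : (SimpleGraph.mulCayley S).Reachable 1 g := by
    have hg : g ∈ Subgroup.closure S := hS ▸ Subgroup.mem_top g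
    induction hg using Subgroup.closure_induction_right with
    | one => rfl
    | mul_right x _ s hs hx => exact hx.trans (mulCayley_reachable_mul x hs)
    | mul_inv_cancel x _ s hs hx =>
      exact hx.trans <| by simpa using (mulCayley_reachable_mul (x * s⁻¹) hs).symm
  exact ⟨fun x y => (hone x).symm.trans (hone y)⟩

theorem mulCayley_neighborSet_finite (hS : S.Finite) (x : T) :
    ((SimpleGraph.mulCayley S).neighborSet x).Finite := by
  refine ((hS.union hS.inv).image (x * ·)).subset fun y hy => ⟨x⁻¹ * y, ?_, by simp⟩
  simpa using ((SimpleGraph.mulCayley_adj S x y).1 hy).2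

theorem exists_injective_seq_step_mem [Infinite T] [Group.FG T] :
    ∃ (S : Finset T) (x : ℕ → T), x 0 = 1 ∧ Function.Injective x ∧
      ∀ n, x (n + 1) * (x n)⁻¹ ∈ S := by
  classical
  obtain ⟨S, hS⟩ := Group.FG.out (G := T)
  obtain ⟨ray, h0, hinj, hadj⟩ := exists_injective_ray (mulCayley_connected hS)
    (mulCayley_neighborSet_finite S.finite_toSet) 1
  refine ⟨S ∪ S.image (·⁻¹), fun n => (ray n)⁻¹, by simp [h0], inv_injective.comp hinj, fun n => ?_⟩
  simpa [inv_eq_iff_eq_inv] using ((SimpleGraph.mulCayley_adj _ _ _).1 (hadj n)).2.symm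

open scoped Classical in
theorem sum_ite_exists {α β : Type*} {S : Finset β} {y : ℕ → α} (hy : Function.Injective y)
    {step : ℕ → β} (hstep : ∀ n, step n ∈ S) (a : α) :
    ∑ s ∈ S, (if ∃ n, y n = a ∧ step n = s then 1 else 0 : ℤ) = if ∃ n, y n = a then 1 else 0 := by
  split_ifs with ha
  · obtain ⟨n, rfl⟩ := ha
    simp [hy.eq_iff, hstep]
  · exact Finset.sum_eq_zero fun s _ => if_neg fun ⟨n, hn, _⟩ => ha ⟨n, hn⟩

/-- The ray `x` followed by means of the left multiplications by `s n := x (n + 1) * (x n)⁻¹` gives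
the indicators `c s` of `{x n | s n = s}`, which telescope. -/
theorem exists_single_eq_sum_sub_translate [DecidableEq T] [Infinite T] [Group.FG T] :
    ∃ (S : Finset T) (c : T → T → ℤ), (∀ s, (Set.range (c s)).Finite) ∧
      Pi.single 1 1 = ∑ s ∈ S, (c s - fun y => c s (s⁻¹ * y)) := by
  classical
  obtain ⟨S, x, h0, hinj, hstep⟩ := exists_injective_seq_step_mem (T := T)
  let step n := x (n + 1) * (x n)⁻¹
  have hsucc : Function.Injective fun n => x (n + 1) := fun m n h => by simpa using hinj h
  have translate (s a : T) :
      (∃ n, x n = s⁻¹ * a ∧ step n = s) ↔ ∃ n, x (n + 1) = a ∧ step n = s :=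
    exists_congr fun n => and_congr_left fun hs => by
      rw [eq_inv_mul_iff_mul_eq, ← hs, inv_mul_cancel_right]
  refine ⟨S, fun s y => if ∃ n, x n = y ∧ step n = s then 1 else 0,
    fun s => Set.finite_range_ite Set.finite_range_const Set.finite_range_const, ?_⟩
  ext a
  simp only [Finset.sum_apply, Pi.sub_apply, Finset.sum_sub_distrib, translate,
    sum_ite_exists hinj (step := step) hstep, sum_ite_exists hsucc (step := step) hstep]
  have hrange : (∃ n, x n = a) ↔ a = 1 ∨ ∃ n, x (n + 1) = a := by
    rw [← Nat.or_exists_add_one, h0, eq_comm]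
  have hone : ¬∃ n, x (n + 1) = 1 := fun ⟨n, hn⟩ => n.succ_ne_zero (hinj (hn.trans h0.symm))
  obtain rfl | ha := eq_or_ne a 1
  · simp [hrange, hone]
  · simp [hrange, ha]

end Rays

section TreeAutomorphisms

variable {X : Type*}

/-- The permutation of the tree `List X` of finite words over `X` which fixes first letters and acts
on the words beginning with `x` through the permutation `g x` of their tails. -/
def onTails : (X → Equiv.Perm (List X)) →* Equiv.Perm (List X) where
  toFun g :=
    { toFun
      | [] => []
      | x :: l => x :: g x l
      invFun
      | [] => []
      | x :: l => x :: (g x)⁻¹ l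
      left_inv l := by cases l <;> simp
      right_inv l := by cases l <;> simp }
  map_one' := by ext1 l; cases l <;> rfl
  map_mul' _ _ := by ext1 l; cases l <;> rfl

@[simp] theorem onTails_nil (g : X → Equiv.Perm (List X)) : onTails g [] = [] := rfl

@[simp] theorem onTails_cons (g : X → Equiv.Perm (List X)) (x : X) (l : List X) :
    onTails g (x :: l) = x :: g x l := rfl

theorem onTails_injective : Function.Injective (onTails (X := X)) := fun _ _ hgh =>
  funext fun x => Equiv.ext fun l => (List.cons.inj (DFunLike.congr_fun hgh (x :: l))).2

theorem isOfFinOrder_onTails [Finite X] {g : X → Equiv.Perm (List X)}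
    (hg : ∀ x, IsOfFinOrder (g x)) : IsOfFinOrder (onTails g) :=
  onTails.isOfFinOrder (IsOfFinOrder.pi hg)

end TreeAutomorphisms

section CharP

variable {R : Type*} [CommRing R] {p : ℕ} [CharP R p] [Fact p.Prime]

theorem nsmul_injOn_range {e : R} (he : e ≠ 0) : Set.InjOn (· • e) (Set.Iio p) := by
  have hp : addOrderOf e = p := addOrderOf_eq_prime (by simp) he
  exact hp ▸ nsmul_injOn_Iio_addOrderOf

theorem sum_range_sub_nsmul (hp : p ≠ 2) (x e : R) : ∑ j ∈ Finset.range p, (x - j • e) = 0 := by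
  have hdvd : p ∣ ∑ j ∈ Finset.range p, j := by
    have hcoprime : p.Coprime 2 := (Nat.coprime_primes Fact.out Nat.prime_two).2 hp
    exact hcoprime.dvd_of_dvd_mul_right ⟨_, Finset.sum_range_id_mul_two p⟩
  rw [Finset.sum_sub_distrib, ← Finset.sum_smul, Finset.sum_const, Finset.card_range, nsmul_eq_mul,
    nsmul_eq_mul, (CharP.cast_eq_zero_iff R p _).2 hdvd, CharP.cast_eq_zero, zero_mul, zero_mul,
    sub_zero]

end CharP

namespace GGS

variable {R : Type*} [CommRing R]

/-- The rooted automorphisms of the tree `List R`: `rooted i` adds `i` to the first letter. -/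
def rooted : AddChar R (Equiv.Perm (List R)) where
  toFun i :=
    { toFun
      | [] => []
      | x :: l => (x + i) :: l
      invFun
      | [] => []
      | x :: l => (x - i) :: l
      left_inv l := by cases l <;> simp
      right_inv l := by cases l <;> simp }
  map_zero_eq_one' := by ext1 l; cases l <;> simp
  map_add_eq_mul' i j := by ext1 l; cases l <;> simp [add_comm i j, add_assoc]

@[simp] theorem rooted_nil (i : R) : rooted i [] = [] := rfl

@[simp] theorem rooted_cons (i x : R) (l : List R) : rooted i (x :: l) = (x + i) :: l := rfl

theorem rooted_mul_onTails (i : R) (f : R → Equiv.Perm (List R)) :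
    rooted i * onTails f = onTails (fun x => f (x - i)) * rooted i := by
  ext1 l
  cases l <;> simp

/-- The action of `rooted i` by conjugation on words: see `rooted_mul_word`. -/
def translate (i : R) (L : List (R × R)) : List (R × R) := L.map fun q => (i + q.1, q.2)

theorem sum_flatMap_translate {p : ℕ} [CharP R p] [Fact p.Prime] (hp : p ≠ 2) (x e : R)
    (L : List (R × R)) :
    (((List.range p).flatMap fun j => translate (j • e) L).map
      fun q => (x - q.1) * q.2).sum = 0 := by
  have hsum : (((List.range p).flatMap fun j => translate (j • e) L).map
      fun q => (x - q.1) * q.2).sum =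
      ∑ j ∈ Finset.range p, (L.map fun q => (x - q.1 - j • e) * q.2).sum := by
    rw [List.map_flatMap, List.flatMap_def, List.sum_flatten, List.map_map]
    simp only [translate, List.map_map, Function.comp_def, sub_sub, add_comm]
    rfl
  rw [hsum]
  clear hsum
  induction L with
  | nil => simp
  | cons q L ih =>
    simp only [List.map_cons, List.sum_cons, Finset.sum_add_distrib, ih, ← Finset.sum_mul,
      sum_range_sub_nsmul hp, zero_mul, add_zero]

variable [DecidableEq R]

/-- The action of the directed automorphism `directed k` on the words over `R`. -/
def directedFun (k : R) : List R → List R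
  | [] => []
  | x :: l => if x = 0 then x :: directedFun k l else x :: rooted (x * k) l

theorem directedFun_zero (l : List R) : directedFun 0 l = l := by
  induction l with
  | nil => rfl
  | cons x l ih => simp [directedFun, ih, AddChar.map_zero_eq_one]

theorem directedFun_add (i j : R) (l : List R) :
    directedFun (i + j) l = directedFun i (directedFun j l) := by
  induction l with
  | nil => rfl
  | cons x l ih =>
    by_cases hx : x = 0 <;> simp [directedFun, hx, ih, mul_add, AddChar.map_add_eq_mul]

/-- The directed automorphisms of the tree `List R`: `directed k` fixes first letters, acts as
`directed k` again on the tails of words beginning with `0`, and as `rooted (x * k)` on the tails of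
words beginning with `x ≠ 0`. -/
def directed : AddChar R (Equiv.Perm (List R)) where
  toFun k :=
    { toFun := directedFun k
      invFun := directedFun (-k)
      left_inv l := by rw [← directedFun_add, neg_add_cancel, directedFun_zero]
      right_inv l := by rw [← directedFun_add, add_neg_cancel, directedFun_zero] }
  map_zero_eq_one' := Equiv.ext directedFun_zero
  map_add_eq_mul' i j := Equiv.ext (directedFun_add i j)

theorem directed_eq_onTails (k : R) :
    directed k = onTails fun x => if x = 0 then directed k else rooted (x * k) := by
  ext1 l
  cases l with
  | nil => rfl
  | cons x l =>
    change directedFun k (x :: l) = _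
    by_cases hx : x = 0 <;> simp [directedFun, hx]
    rfl

/-- The conjugate of `directed k` by `rooted i`, for `q = (i, k)`. -/
def letter (q : R × R) : Equiv.Perm (List R) := rooted q.1 * directed q.2 * (rooted q.1)⁻¹

/-- The product of the conjugates `letter q`, for `q` running through the list. -/
def word (L : List (R × R)) : Equiv.Perm (List R) := (L.map letter).prod

/-- The permutation of tails of words beginning with `x` induced by `letter q`. -/
def letterSection (x : R) (q : R × R) : Equiv.Perm (List R) :=
  if x = q.1 then directed q.2 else rooted ((x - q.1) * q.2)

@[simp] theorem word_nil : word ([] : List (R × R)) = 1 := rfl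

@[simp] theorem word_cons (q : R × R) (L : List (R × R)) : word (q :: L) = letter q * word L :=
  List.prod_cons

@[simp] theorem word_append (L M : List (R × R)) : word (L ++ M) = word L * word M := by
  simp [word]

theorem letter_eq_onTails (q : R × R) : letter q = onTails fun x => letterSection x q := by
  rw [letter, directed_eq_onTails, rooted_mul_onTails, mul_inv_cancel_right]
  simp only [letterSection, sub_eq_zero]

theorem word_eq_onTails (L : List (R × R)) :
    word L = onTails fun x => (L.map (letterSection x)).prod := by
  induction L with
  | nil => exact (map_one onTails).symm
  | cons q L ih =>
    rw [word_cons, ih, letter_eq_onTails, ← map_mul]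
    rfl

theorem rooted_mul_letter (i : R) (q : R × R) :
    rooted i * letter q = letter (i + q.1, q.2) * rooted i := by
  simp [letter, AddChar.map_add_eq_mul, mul_assoc]

theorem rooted_mul_word (i : R) (L : List (R × R)) :
    rooted i * word L = word (translate i L) * rooted i := by
  induction L with
  | nil => simp [translate]
  | cons q L ih =>
    rw [word_cons, ← mul_assoc, rooted_mul_letter, mul_assoc, ih, ← mul_assoc]
    rfl

/-- The letters whose first component is not `x` contribute only rooted automorphisms, which are
moved to the end. -/
theorem exists_prod_letterSection_eq (x : R) (L : List (R × R)) :
    ∃ L' : List (R × R), L'.length = L.countP (·.1 = x) ∧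
      (L.map (letterSection x)).prod =
        word L' * rooted (L.map fun q => (x - q.1) * q.2).sum := by
  induction L with
  | nil => exact ⟨[], rfl, by simp [AddChar.map_zero_eq_one]⟩
  | cons q L ih =>
    obtain ⟨L', hlength, hL'⟩ := ih
    simp only [List.map_cons, List.prod_cons, List.sum_cons, hL']
    by_cases hx : x = q.1
    · refine ⟨(0, q.2) :: L', by simp [hlength, hx], ?_⟩
      simp [letterSection, hx, letter, AddChar.map_zero_eq_one, mul_assoc]
    · refine ⟨translate ((x - q.1) * q.2) L', by simp [translate, hlength, Ne.symm hx], ?_⟩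
      rw [AddChar.map_add_eq_mul, ← mul_assoc (word _), ← rooted_mul_word, letterSection,
        if_neg hx, mul_assoc]

theorem word_mul_rooted_pow (L : List (R × R)) (e : R) (n : ℕ) :
    (word L * rooted e) ^ n =
      word ((List.range n).flatMap fun j => translate (j • e) L) * rooted (n • e) := by
  induction n with
  | zero => simp [AddChar.map_zero_eq_one]
  | succ n ih =>
    rw [pow_succ, ih, List.range_succ, List.flatMap_append, word_append, succ_nsmul,
      AddChar.map_add_eq_mul, List.flatMap_singleton, mul_assoc (word _),
      ← mul_assoc (rooted (n • e)), rooted_mul_word]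
    simp only [mul_assoc]

theorem word_eq_letter {L : List (R × R)} {i : R} (hL : ∀ q ∈ L, q.1 = i) :
    word L = letter (i, (L.map Prod.snd).sum) := by
  induction L with
  | nil => simp [letter, AddChar.map_zero_eq_one]
  | cons q L ih =>
    obtain ⟨hq, hL⟩ := List.forall_mem_cons.1 hL
    simp [ih hL, letter, hq, AddChar.map_add_eq_mul, mul_assoc]

section Torsion

variable {p : ℕ} [CharP R p]

theorem isOfFinOrder_letter (hp : 0 < p) (q : R × R) : IsOfFinOrder (letter q) := by
  refine isOfFinOrder_iff_pow_eq_one.2 ⟨p, hp, ?_⟩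
  rw [letter, conj_pow, ← AddChar.map_nsmul_eq_pow, nsmul_eq_mul, CharP.cast_eq_zero, zero_mul,
    AddChar.map_zero_eq_one, mul_one, mul_inv_cancel]

theorem isOfFinOrder_word [Finite R] (hp : 0 < p) {L : List (R × R)}
    (shorter : ∀ L' : List (R × R), L'.length < L.length → ∀ e, IsOfFinOrder (word L' * rooted e)) :
    IsOfFinOrder (word L) := by
  by_cases hL : ∃ i, ∀ q ∈ L, q.1 = i
  · obtain ⟨i, hi⟩ := hL
    exact word_eq_letter hi ▸ isOfFinOrder_letter hp _
  · rw [word_eq_onTails]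
    refine isOfFinOrder_onTails fun x => ?_
    obtain ⟨L', hlength, hL'⟩ := exists_prod_letterSection_eq x L
    rw [hL']
    refine shorter L' (hlength ▸ List.countP_le_length.lt_of_ne fun hall => hL ⟨x, ?_⟩) _
    simpa using List.countP_eq_length.1 hall

variable [Fact p.Prime]

theorem countP_flatMap_translate_le (x : R) {e : R} (he : e ≠ 0) (L : List (R × R)) :
    ((List.range p).flatMap fun j => translate (j • e) L).countP (·.1 = x) ≤ L.length := by
  have hsum : ((List.range p).flatMap fun j => translate (j • e) L).countP (·.1 = x) =
      ∑ j ∈ Finset.range p, L.countP fun q => j • e + q.1 = x := by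
    rw [List.countP_flatMap]
    simp only [translate, Function.comp_def, List.countP_map]
    rfl
  rw [hsum]
  clear hsum
  induction L with
  | nil => simp
  | cons q L ih =>
    have hq : (∑ j ∈ Finset.range p, if j • e + q.1 = x then 1 else 0) ≤ 1 := by
      rw [← Finset.card_filter, Finset.card_le_one]
      intro j hj k hk
      rw [Finset.mem_filter, Finset.mem_range] at hj hk
      exact nsmul_injOn_range he hj.1 hk.1 (add_right_cancel (hj.2.trans hk.2.symm))
    simpa only [List.countP_cons, decide_eq_true_eq, Finset.sum_add_distrib, List.length_cons]
      using add_le_add ih hq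

/-- While `rooted e` permutes the first letters without fixed points, the `p`-th power of
`word L * rooted e` fixes them, and its sections are words no longer than `L`. -/
theorem exists_pow_eq_onTails (hp : p ≠ 2) {e : R} (he : e ≠ 0) (L : List (R × R)) :
    ∃ L' : R → List (R × R), (∀ x, (L' x).length ≤ L.length) ∧
      (word L * rooted e) ^ p = onTails fun x => word (L' x) := by
  choose L' hlength hL' using fun x : R =>
    exists_prod_letterSection_eq x ((List.range p).flatMap fun j => translate (j • e) L)
  refine ⟨L', fun x => hlength x ▸ countP_flatMap_translate_le x he L, ?_⟩
  rw [word_mul_rooted_pow, nsmul_eq_mul, CharP.cast_eq_zero, zero_mul, AddChar.map_zero_eq_one,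
    mul_one, word_eq_onTails]
  simp only [hL', sum_flatMap_translate hp, AddChar.map_zero_eq_one, mul_one]

theorem isOfFinOrder_word_mul_rooted [Finite R] (hp : p ≠ 2) (L : List (R × R)) (e : R) :
    IsOfFinOrder (word L * rooted e) := by
  have hpos : 0 < p := (Fact.out : p.Prime).pos
  induction hn : L.length using Nat.strong_induction_on generalizing L e with
  | h n ih =>
    have hword (L' : List (R × R)) (hL' : L'.length ≤ n) : IsOfFinOrder (word L') :=
      isOfFinOrder_word hpos fun L'' h e => ih _ (h.trans_le hL') L'' e rfl
    by_cases he : e = 0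
    · simpa [he, AddChar.map_zero_eq_one] using hword L hn.le
    · obtain ⟨L', hlength, hpow⟩ := exists_pow_eq_onTails hp he L
      refine IsOfFinOrder.of_pow (n := p) ?_ hpos.ne'
      exact hpow ▸ isOfFinOrder_onTails fun x => hword _ (hn ▸ hlength x)

end Torsion

variable (R) in
/-- The group generated by `rooted` and `directed` automorphisms; for `R = ZMod 3` this is the
Gupta–Sidki group. -/
def ggsGroup : Subgroup (Equiv.Perm (List R)) :=
  Subgroup.closure (Set.range rooted ∪ Set.range directed)

theorem rooted_mem (i : R) : rooted i ∈ ggsGroup R :=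
  Subgroup.subset_closure (.inl ⟨i, rfl⟩)

theorem directed_mem (k : R) : directed k ∈ ggsGroup R :=
  Subgroup.subset_closure (.inr ⟨k, rfl⟩)

theorem letter_mem (q : R × R) : letter q ∈ ggsGroup R :=
  mul_mem (mul_mem (rooted_mem _) (directed_mem _)) (inv_mem (rooted_mem _))

instance fg [Finite R] : Group.FG (ggsGroup R) :=
  (Group.fg_iff_subgroup_fg _).2 <| Subgroup.fg_iff _ |>.2
    ⟨_, rfl, (Set.finite_range _).union (Set.finite_range _)⟩

theorem exists_eq_word_mul_rooted {g : Equiv.Perm (List R)} (hg : g ∈ ggsGroup R) :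
    ∃ L e, g = word L * rooted e := by
  have hdirected (k : R) (L : List (R × R)) (e : R) :
      directed k * (word L * rooted e) = word ((0, k) :: L) * rooted e := by
    simp [letter, AddChar.map_zero_eq_one, mul_assoc]
  have hrooted (i : R) (L : List (R × R)) (e : R) :
      rooted i * (word L * rooted e) = word (translate i L) * rooted (i + e) := by
    rw [← mul_assoc, rooted_mul_word, AddChar.map_add_eq_mul, mul_assoc]
  induction hg using Subgroup.closure_induction_left with
  | one => exact ⟨[], 0, by simp [AddChar.map_zero_eq_one]⟩
  | mul_left s hs g _ ih =>
    obtain ⟨L, e, rfl⟩ := ih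
    obtain ⟨i, rfl⟩ | ⟨k, rfl⟩ := hs
    exacts [⟨_, _, hrooted i L e⟩, ⟨_, _, hdirected k L e⟩]
  | inv_mul_cancel s hs g _ ih =>
    obtain ⟨L, e, rfl⟩ := ih
    obtain ⟨i, rfl⟩ | ⟨k, rfl⟩ := hs
    · rw [← AddChar.map_neg_eq_inv]
      exact ⟨_, _, hrooted (-i) L e⟩
    · rw [← AddChar.map_neg_eq_inv]
      exact ⟨_, _, hdirected (-k) L e⟩

theorem isMulTorsion [Finite R] {p : ℕ} [CharP R p] [Fact p.Prime] (hp : p ≠ 2) :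
    IsMulTorsion (ggsGroup R) := fun ⟨g, hg⟩ => by
  obtain ⟨L, e, rfl⟩ := exists_eq_word_mul_rooted hg
  exact Submonoid.isOfFinOrder_coe.1 (isOfFinOrder_word_mul_rooted hp L e)

theorem exists_onTails_mem [Nontrivial R] {g : Equiv.Perm (List R)} (hg : g ∈ ggsGroup R) :
    ∃ f, onTails f ∈ ggsGroup R ∧ f 0 = g := by
  induction hg using Subgroup.closure_induction with
  | mem g hg =>
    obtain ⟨i, rfl⟩ | ⟨k, rfl⟩ := hg
    · exact ⟨_, letter_eq_onTails (-1, i) ▸ letter_mem _, by simp [letterSection]⟩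
    · exact ⟨_, letter_eq_onTails (0, k) ▸ letter_mem _, by simp [letterSection]⟩
  | one => exact ⟨1, by simp [one_mem], rfl⟩
  | mul g h _ _ ihg ihh =>
    obtain ⟨f, hf, rfl⟩ := ihg
    obtain ⟨f', hf', rfl⟩ := ihh
    exact ⟨f * f', map_mul onTails f f' ▸ mul_mem hf hf', rfl⟩
  | inv g _ ih =>
    obtain ⟨f, hf, rfl⟩ := ih
    exact ⟨f⁻¹, map_inv onTails f ▸ inv_mem hf, rfl⟩

/-- Sending an element to a member of the group that has it as its section at `0` is injective, but
misses the elements which move first letters. -/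
theorem infinite [Nontrivial R] : Infinite (ggsGroup R) := by
  choose f hmem hf using fun g : ggsGroup R => exists_onTails_mem g.2
  let lift (g : ggsGroup R) : ggsGroup R := ⟨onTails (f g), hmem g⟩
  have hinj : Function.Injective lift := fun g h hgh => Subtype.ext <| by
    rw [← hf g, ← hf h, onTails_injective (congrArg Subtype.val hgh)]
  refine not_finite_iff_infinite.1 fun _ => ?_
  obtain ⟨g, hg⟩ := Finite.surjective_of_injective hinj ⟨rooted 1, rooted_mem 1⟩
  have hmove : onTails (f g) [0] = rooted 1 [0] := DFunLike.congr_fun (congrArg Subtype.val hg) [0]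
  simp at hmove

end GGS

section PerfectTorsionGroup

variable {D Q : Type*} [Group D] [Group Q]

theorem isMulTorsion_regularWreathProduct [Finite Q] (hD : IsMulTorsion D) :
    IsMulTorsion (D ≀ᵣ Q) := by
  have hbase : IsMulTorsion (Q → D) := fun f => IsOfFinOrder.pi fun x => hD (f x)
  have hrange : IsMulTorsion (wreathBase : (Q → D) →* D ≀ᵣ Q).range :=
    hbase.of_surjective (MonoidHom.rangeRestrict_surjective (wreathBase : (Q → D) →* D ≀ᵣ Q))
  exact .extension_closed ker_rightHom_eq_range_wreathBase.symm isMulTorsion_of_finite hrange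

theorem exists_wreathBase_mem_topConjugates [DecidableEq Q] [Nontrivial Q] {S : Set D}
    (hS : Subgroup.closure S = ⊤) (d : D) :
    ∃ f, wreathBase f ∈ topConjugates (insert 1 (Pi.mulSingle (1 : Q) '' S)) ∧ f 1 = d := by
  set K := topConjugates (insert 1 (Pi.mulSingle (1 : Q) '' S))
  suffices hK : ⊤ ≤ (K.comap wreathBase).map (Pi.evalMonoidHom (fun _ => D) 1) from
    hK (Subgroup.mem_top d)
  obtain ⟨q, hq⟩ := exists_ne (1 : Q)
  rw [← hS, Subgroup.closure_le]
  intro s hs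
  have hmem : wreathBase _ ∈ K := wreathBase_mem_topConjugates (Set.mem_insert _ _)
    (Set.mem_insert_of_mem _ (Set.mem_image_of_mem _ hs)) q
  exact ⟨_, hmem, by simp [hq]⟩

theorem exists_perfect_infinite_fg_torsion_group :
    ∃ (T : Type) (_ : Group T), Group.IsPerfect T ∧ Group.FG T ∧ Infinite T ∧ IsMulTorsion T := by
  have : Group.IsPerfect (alternatingGroup (Fin 5)) :=
    ⟨commutator_alternatingGroup_eq_top (by simp)⟩
  have hD : IsMulTorsion (GGS.ggsGroup (ZMod 3)) := GGS.isMulTorsion (p := 3) (by decide)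
  have := GGS.infinite (R := ZMod 3)
  obtain ⟨S, hS, hfin⟩ := Group.fg_iff.1 (GGS.fg (R := ZMod 3))
  choose f hmem hf using exists_wreathBase_mem_topConjugates (Q := alternatingGroup (Fin 5)) hS
  let K := topConjugates (insert 1 (Pi.mulSingle (1 : alternatingGroup (Fin 5)) '' S))
  refine ⟨K, inferInstance, topConjugates_isPerfect,
    topConjugates_fg ((hfin.image _).insert 1), ?_,
    (isMulTorsion_regularWreathProduct hD).subgroup _⟩
  refine .of_injective (fun d => (⟨wreathBase (f d), hmem d⟩ : K)) fun d e hde => ?_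
  rw [← hf d, ← hf e, wreathBase_injective (congrArg Subtype.val hde)]

end PerfectTorsionGroup

section Embedding

variable {G T : Type*} [Group G] [Group T]

theorem wreathBase_zpow_sum_mem {ι : Type*} {K : Subgroup (G ≀ᵣ T)} {g : G} {S : Finset ι}
    {u : ι → T → ℤ} (hu : ∀ s ∈ S, wreathBase (fun y => g ^ u s y) ∈ K) :
    wreathBase (fun y => g ^ (∑ s ∈ S, u s) y) ∈ K := by
  refine Finset.sum_induction u (fun v => wreathBase (fun y => g ^ v y) ∈ K) (fun v v' hv hv' => ?_)
    ?_ hu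
  · have hmul : (fun y => g ^ (v + v') y) = (fun y => g ^ v y) * fun y => g ^ v' y :=
      funext fun y => zpow_add g (v y) (v' y)
    rw [hmul, map_mul]
    exact mul_mem hv hv'
  · have hone : (fun y => g ^ (0 : T → ℤ) y) = 1 := funext fun _ => zpow_zero g
    rw [hone, map_one]
    exact one_mem K

theorem exists_forall_mulSingle_mem_topConjugates [Group.FG G] [Group.FG T] [Infinite T]
    [DecidableEq T] :
    ∃ F : Set (T → G), F.Finite ∧ 1 ∈ F ∧ F ⊆ finiteRangeSubgroup T G ∧
      ∀ g, wreathBase (Pi.mulSingle 1 g) ∈ topConjugates F := by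
  obtain ⟨A, hA, hfin⟩ := Group.fg_iff.1 (inferInstance : Group.FG G)
  obtain ⟨S, c, hc, hsum⟩ := exists_single_eq_sum_sub_translate (T := T)
  set F : Set (T → G) := insert 1 (Set.image2 (fun g s y => g ^ c s y) A S)
  have h1 : (1 : T → G) ∈ F := Set.mem_insert _ _
  refine ⟨F, (hfin.image2 _ S.finite_toSet).insert 1, h1, ?_, fun g => ?_⟩
  · refine Set.insert_subset (one_mem _) ?_
    rintro _ ⟨g, -, s, -, rfl⟩
    exact ((hc s).image (g ^ ·)).subset (Set.range_comp (g ^ ·) (c s)).subset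
  suffices hK : ⊤ ≤ (topConjugates F).comap (wreathBase.comp (MonoidHom.mulSingle (fun _ => G) 1))
    from hK (Subgroup.mem_top g)
  rw [← hA, Subgroup.closure_le]
  intro g hg
  have hdiff (s) (hs : s ∈ S) :
      wreathBase (fun y => g ^ (c s - fun y => c s (s⁻¹ * y)) y) ∈ topConjugates F := by
    have hzpow : (fun y => g ^ (c s - fun y => c s (s⁻¹ * y)) y) =
        (fun y => g ^ c s y) * fun y => (g ^ c s (s⁻¹ * y))⁻¹ := funext fun y => zpow_sub g _ _
    rw [hzpow]
    exact wreathBase_mem_topConjugates h1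
      (Set.mem_insert_of_mem _ (Set.mem_image2_of_mem hg hs)) s
  have hsingle : (fun y => g ^ (Pi.single 1 1 : T → ℤ) y) = Pi.mulSingle 1 g := by
    ext y
    obtain rfl | hy := eq_or_ne y 1 <;> simp [*]
  have hmem := wreathBase_zpow_sum_mem hdiff
  rwa [← hsum, hsingle] at hmem

end Embedding

theorem embeds_into_fg_perfect_group_with_law_general {r : ℕ} (w : FreeGroup (Fin r)) {G : Type u}
    [Group G] (hfg : Group.FG G) (hlaw : SatisfiesLawUpToPowers w G) :
    ∃ (Γ : Type u) (_ : Group Γ) (φ : G →* Γ),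
      Function.Injective φ ∧
      Group.FG Γ ∧
      commutator Γ = ⊤ ∧
      Infinite Γ ∧
      SatisfiesLawUpToPowers w Γ := by
  classical
  obtain ⟨T, _, _, _, _, hT⟩ := exists_perfect_infinite_fg_torsion_group
  obtain ⟨F, hfin, h1, hF, hmem⟩ := exists_forall_mulSingle_mem_topConjugates (G := G) (T := T)
  have := topConjugates_isPerfect (F := F)
  let φ : G →* topConjugates F :=
    (wreathBase.comp (MonoidHom.mulSingle (fun _ : T => G) 1)).codRestrict _ hmem
  have hφ : Function.Injective φ := fun g h hgh =>
    Pi.mulSingle_injective 1 (wreathBase_injective (congrArg Subtype.val hgh))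
  exact ⟨topConjugates F, inferInstance, φ, hφ, topConjugates_fg hfin,
    Group.IsPerfect.commutator_eq_top, topConjugates_infinite h1,
    (hlaw.wreath_finiteRange hT).of_injective
      (Subgroup.inclusion_injective (topConjugates_le_wreathFiniteRange hF))⟩

/-- Every finitely generated, residually finite group satisfying the law `w` up to
powers embeds into a finitely generated, perfect, infinite group satisfying the law
`w` up to powers. -/
theorem embeds_into_fg_perfect_group_with_law {r : ℕ} (hr : 0 < r)
    (w : FreeGroup (Fin r)) {G : Type u} [Group G]
    (hfg : Group.FG G) (hrf : ResiduallyFinite G) (hlaw : SatisfiesLawUpToPowers w G) :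
    ∃ (Γ : Type u) (_ : Group Γ) (φ : G →* Γ),
      Function.Injective φ ∧
      Group.FG Γ ∧
      commutator Γ = ⊤ ∧
      Infinite Γ ∧
      SatisfiesLawUpToPowers w Γ :=
  embeds_into_fg_perfect_group_with_law_general w hfg hlaw
end

section
/- Let ι be a finite type and let (G_i)_{i ∈ ι} be a family of groups. The direct product Π_{i ∈ ι} G_i contains a non-abelian free subgroup if and only if there exists an index i ∈ ι such that G_i contains a non-abelian free subgroup. (Lemma 3.1 of the paper.) -/
/-!
Two non-trivial normal subgroups of a free group of rank at least two always intersect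
non-trivially. Indeed, disjoint normal subgroups commute elementwise, whereas non-trivial elements
`g` and `h` have conjugates `q g q⁻¹` and `r h r⁻¹` that are reduced as written, with distinct
letters `q` and `r`: each choice has to avoid at most three of at least four letters. The products
of these conjugates in the two orders are again reduced as written and start with different
letters, so they differ.

The coordinates of an embedding of such a free group into a finite product have kernels which
intersect trivially, so one of these kernels is trivial.
-/

open Function

section Words

variable {α : Type*}

theorem exists_letter_ne_ne_ne [Nontrivial α] (a b c : α × Bool) :
    ∃ q, q ≠ a ∧ q ≠ b ∧ q ≠ c := by
  classical
  have card_lt : (({a, b, c} : Finset (α × Bool)).card : ℕ∞) < ENat.card (α × Bool) := calc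
    _ ≤ ((3 : ℕ) : ℕ∞) := mod_cast Finset.card_le_three
    _ < (1 + 1) * 2 := by norm_num
    _ ≤ ENat.card α * ENat.card Bool := by
      gcongr
      · exact Order.add_one_le_of_lt ENat.one_lt_card
      · simp
    _ = ENat.card (α × Bool) := (ENat.card_prod _ _).symm
  simpa using Finset.exists_not_mem_of_card_lt_enatCard card_lt

/-- The word `q w q⁻¹` without any cancellation performed; it represents the conjugate of `w` by the
letter `q`, whose inverse is encoded as `(q.1, !q.2)`. -/
def conjWord (q : α × Bool) (w : List (α × Bool)) : List (α × Bool) :=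
  q :: (w ++ [(q.1, !q.2)])

theorem mk_conjWord (q : α × Bool) (w : List (α × Bool)) :
    FreeGroup.mk (conjWord q w) = FreeGroup.mk [q] * FreeGroup.mk w * (FreeGroup.mk [q])⁻¹ := by
  simp [conjWord, FreeGroup.invRev]

theorem isReduced_conjWord {w : List (α × Bool)} (hw : FreeGroup.IsReduced w) (hne : w ≠ [])
    {q : α × Bool} (hhead : q ≠ ((w.head hne).1, !(w.head hne).2)) (hlast : q ≠ w.getLast hne) :
    FreeGroup.IsReduced (conjWord q w) := by
  have q_head : q.1 = (w.head hne).1 → q.2 = (w.head hne).2 := by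
    simpa [Prod.ext_iff] using hhead
  have last_q : (w.getLast hne).1 = q.1 → (w.getLast hne).2 = !q.2 := by
    simpa [Prod.ext_iff, eq_comm, Bool.eq_not] using hlast
  simpa [conjWord, FreeGroup.IsReduced, List.isChain_cons, List.isChain_append,
    List.head?_append_of_ne_nil _ hne, List.head?_eq_some_head hne,
    List.getLast?_eq_some_getLast hne] using ⟨q_head, hw, last_q⟩

theorem isReduced_conjWord_append {q r : α × Bool} {v w : List (α × Bool)} (hqr : q ≠ r)
    (hv : FreeGroup.IsReduced (conjWord q v)) (hw : FreeGroup.IsReduced (conjWord r w)) :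
    FreeGroup.IsReduced (conjWord q v ++ conjWord r w) := by
  have getLast_eq : (conjWord q v).getLast? = some (q.1, !q.2) := List.getLast?_concat (l := q :: v)
  have head_eq : (conjWord r w).head? = some r := rfl
  refine List.isChain_append.2 ⟨hv, hw, ?_⟩
  simp only [getLast_eq, head_eq, Option.mem_some_iff, forall_eq']
  simpa [Prod.ext_iff, Bool.eq_not] using hqr

theorem not_commute_mk_conjWord {q r : α × Bool} {v w : List (α × Bool)} (hqr : q ≠ r)
    (hv : FreeGroup.IsReduced (conjWord q v)) (hw : FreeGroup.IsReduced (conjWord r w)) :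
    ¬ Commute (FreeGroup.mk (conjWord q v)) (FreeGroup.mk (conjWord r w)) := by
  classical
  intro hcomm
  have words_eq : conjWord q v ++ conjWord r w = conjWord r w ++ conjWord q v := by
    simpa only [FreeGroup.mul_mk, FreeGroup.toWord_mk,
      (isReduced_conjWord_append hqr hv hw).reduce_eq,
      (isReduced_conjWord_append hqr.symm hw hv).reduce_eq] using
      congrArg FreeGroup.toWord hcomm.eq
  exact hqr (List.cons.inj words_eq).1

end Words

section NormalSubgroups

variable {α : Type*} [Nontrivial α]

theorem exists_ne_isReduced_conjWord_toWord [DecidableEq α] {g : FreeGroup α} (hg : g ≠ 1)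
    (p : α × Bool) : ∃ q ≠ p, FreeGroup.IsReduced (conjWord q g.toWord) := by
  have hne : g.toWord ≠ [] := mt FreeGroup.toWord_eq_nil_iff.1 hg
  obtain ⟨q, hqp, hhead, hlast⟩ := exists_letter_ne_ne_ne p _ _
  exact ⟨q, hqp, isReduced_conjWord FreeGroup.isReduced_toWord hne hhead hlast⟩

theorem freeGroup_exists_not_commute_conj {g h : FreeGroup α} (hg : g ≠ 1) (hh : h ≠ 1) :
    ∃ c d, ¬ Commute (c * g * c⁻¹) (d * h * d⁻¹) := by
  classical
  obtain ⟨p⟩ : Nonempty (α × Bool) := inferInstance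
  obtain ⟨q, -, hq⟩ := exists_ne_isReduced_conjWord_toWord hg p
  obtain ⟨r, hrq, hr⟩ := exists_ne_isReduced_conjWord_toWord hh q
  refine ⟨FreeGroup.mk [q], FreeGroup.mk [r], ?_⟩
  simpa only [mk_conjWord, FreeGroup.mk_toWord] using not_commute_mk_conjWord hrq.symm hq hr

theorem freeGroup_infClosed_normal_ne_bot :
    InfClosed {N : Subgroup (FreeGroup α) | N.Normal ∧ N ≠ ⊥} := by
  rintro A ⟨hA, hA_ne⟩ B ⟨hB, hB_ne⟩
  refine ⟨inferInstance, fun hAB ↦ ?_⟩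
  obtain ⟨a, ha, ha_ne⟩ := A.bot_or_exists_ne_one.resolve_left hA_ne
  obtain ⟨b, hb, hb_ne⟩ := B.bot_or_exists_ne_one.resolve_left hB_ne
  obtain ⟨c, d, hcd⟩ := freeGroup_exists_not_commute_conj ha_ne hb_ne
  exact hcd <| Subgroup.commute_of_normal_of_disjoint A B hA hB (disjoint_iff.2 hAB) _ _
    (hA.conj_mem a ha c) (hB.conj_mem b hb d)

end NormalSubgroups

section Pi

variable {ι : Type*} {G : ι → Type*} [∀ i, Group (G i)] {H : Type*} [Group H]

theorem iInf_ker_evalMonoidHom_comp (f : H →* ∀ i, G i) :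
    ⨅ i, ((Pi.evalMonoidHom G i).comp f).ker = f.ker := by
  ext x
  simp [Subgroup.mem_iInf, MonoidHom.mem_ker, funext_iff]

theorem exists_injective_evalMonoidHom_comp [Finite ι] [Nontrivial H]
    (hH : InfClosed {N : Subgroup H | N.Normal ∧ N ≠ ⊥}) {f : H →* ∀ i, G i}
    (hf : Injective f) : ∃ i, Injective ((Pi.evalMonoidHom G i).comp f) := by
  by_contra! hnot
  have ker_mem (i : ι) : ((Pi.evalMonoidHom G i).comp f).ker ∈
      {N : Subgroup H | N.Normal ∧ N ≠ ⊥} :=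
    ⟨inferInstance, mt (MonoidHom.ker_eq_bot_iff _).1 (hnot i)⟩
  have iInf_ker_ne_bot := (hH.iInf_mem ⟨inferInstance, top_ne_bot⟩ ker_mem).2
  rw [iInf_ker_evalMonoidHom_comp] at iInf_ker_ne_bot
  exact iInf_ker_ne_bot ((MonoidHom.ker_eq_bot_iff f).2 hf)

end Pi

theorem pi_containsNonabelianFree_iff_general {α ι : Type*} [Nontrivial α] [Finite ι]
    (G : ι → Type*) [∀ i, Group (G i)] :
    (∃ f : FreeGroup α →* ∀ i, G i, Injective f) ↔
      ∃ i, ∃ f : FreeGroup α →* G i, Injective f := by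
  classical
  constructor
  · rintro ⟨f, hf⟩
    obtain ⟨i, hi⟩ := exists_injective_evalMonoidHom_comp freeGroup_infClosed_normal_ne_bot hf
    exact ⟨i, _, hi⟩
  · rintro ⟨i, f, hf⟩
    exact ⟨(MonoidHom.mulSingle G i).comp f, (Pi.mulSingle_injective i).comp hf⟩

/-- A finite direct product of groups contains a non-abelian free subgroup if and only
if one of the factors does. -/
theorem pi_containsNonabelianFree_iff {ι : Type*} [Finite ι]
    (G : ι → Type*) [∀ i, Group (G i)] :
    ContainsNonabelianFree (∀ i, G i) ↔ ∃ i, ContainsNonabelianFree (G i) :=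
  pi_containsNonabelianFree_iff_general G
end

section
/- Let α be a type with at least two elements and let F be the free group on α. Then every pair of non-trivial normal subgroups of F intersects non-trivially: if N₁ and N₂ are normal subgroups of F with N₁ ≠ {1} and N₂ ≠ {1}, then N₁ ∩ N₂ ≠ {1}. (The key observation in the proof of Lemma 3.1 of the paper.) -/
/-!
Disjoint normal subgroups commute elementwise. In a free group, two commuting elements generate an
abelian subgroup, which is free by the Nielsen–Schreier theorem and hence cyclic, so the two
elements are powers `z ^ m` and `z ^ n` of a common element. If both are non-trivial, then so is
their common power `z ^ (m * n)`, because free groups are torsion-free.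
-/

open Subgroup

theorem toWord_freeGroup_of_mul_of {α : Type*} [DecidableEq α] (a b : α) :
    (FreeGroup.of a * FreeGroup.of b).toWord = [(a, true), (b, true)] := by
  simp [FreeGroup.toWord_mul, FreeGroup.reduce.cons]

theorem commute_freeGroup_of_iff {α : Type*} {a b : α} :
    Commute (FreeGroup.of a) (FreeGroup.of b) ↔ a = b := by
  classical
  refine ⟨fun hab => ?_, fun hab => hab ▸ Commute.refl _⟩
  have toWord_eq : [(a, true), (b, true)] = [(b, true), (a, true)] := by
    rw [← toWord_freeGroup_of_mul_of, ← toWord_freeGroup_of_mul_of, hab.eq]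
  exact congrArg Prod.fst (List.cons.inj toWord_eq).1

theorem isCyclic_freeGroup_of_subsingleton (α : Type*) [Subsingleton α] :
    IsCyclic (FreeGroup α) := by
  rcases isEmpty_or_nonempty α with _ | ⟨⟨a⟩⟩
  · infer_instance
  · have := uniqueOfSubsingleton a
    infer_instance

section IsFreeGroup

variable (G : Type*) [Group G] [IsFreeGroup G]

theorem isMulTorsionFree_of_isFreeGroup : IsMulTorsionFree G :=
  (IsFreeGroup.toFreeGroup G).injective.isMulTorsionFree (IsFreeGroup.toFreeGroup G).toMonoidHom

theorem isCyclic_of_isFreeGroup_of_isMulCommutative [IsMulCommutative G] : IsCyclic G := by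
  have : Subsingleton (IsFreeGroup.Generators G) := ⟨fun a b =>
    commute_freeGroup_of_iff.mp <| (IsFreeGroup.mulEquiv G).injective <| by
      rw [map_mul, map_mul, mul_comm']⟩
  have := isCyclic_freeGroup_of_subsingleton (IsFreeGroup.Generators G)
  exact isCyclic_of_surjective (IsFreeGroup.mulEquiv G) (IsFreeGroup.mulEquiv G).surjective

end IsFreeGroup

section Group

variable {G : Type*} [Group G]

theorem isMulCommutative_closure_pair_of_commute {u v : G} (huv : Commute u v) :
    IsMulCommutative (closure {u, v}) := by
  refine isMulCommutative_closure ?_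
  rintro x (rfl | rfl) y (rfl | rfl)
  exacts [rfl, huv.eq, huv.eq.symm, rfl]

theorem exists_mem_zpowers_of_commute [IsFreeGroup G] {u v : G} (huv : Commute u v) :
    ∃ z : G, u ∈ zpowers z ∧ v ∈ zpowers z := by
  have := isMulCommutative_closure_pair_of_commute huv
  have := isCyclic_of_isFreeGroup_of_isMulCommutative (closure {u, v})
  obtain ⟨z, hz⟩ := (closure {u, v}).isCyclic_iff_exists_zpowers_eq_top.mp this
  exact ⟨z, hz ▸ subset_closure (by simp), hz ▸ subset_closure (by simp)⟩

theorem zpowers_inf_zpowers_ne_bot [IsMulTorsionFree G] {u v z : G} (hu : u ∈ zpowers z)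
    (hv : v ∈ zpowers z) (hu_ne : u ≠ 1) (hv_ne : v ≠ 1) : zpowers u ⊓ zpowers v ≠ ⊥ := by
  obtain ⟨m, rfl⟩ := mem_zpowers_iff.mp hu
  obtain ⟨n, rfl⟩ := mem_zpowers_iff.mp hv
  have hn : n ≠ 0 := fun hn => hv_ne (by rw [hn, zpow_zero])
  have common_power : (z ^ m) ^ n = (z ^ n) ^ m := zpow_comm z m n
  have mem_inf : (z ^ m) ^ n ∈ zpowers (z ^ m) ⊓ zpowers (z ^ n) :=
    ⟨zpow_mem_zpowers _ n, common_power ▸ zpow_mem_zpowers _ m⟩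
  intro inf_eq_bot
  rw [inf_eq_bot, mem_bot] at mem_inf
  exact hu_ne ((IsMulTorsionFree.zpow_eq_one_iff_left hn).mp mem_inf)

theorem normal_inf_ne_bot_of_zpowers_inf_ne_bot
    (hG : ∀ u v : G, Commute u v → u ≠ 1 → v ≠ 1 → zpowers u ⊓ zpowers v ≠ ⊥)
    (N₁ N₂ : Subgroup G) (h₁ : N₁.Normal) (h₂ : N₂.Normal) (hN₁ : N₁ ≠ ⊥) (hN₂ : N₂ ≠ ⊥) :
    N₁ ⊓ N₂ ≠ ⊥ := by
  intro inf_eq_bot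
  obtain ⟨u, hu, hu_ne⟩ := N₁.bot_or_exists_ne_one.resolve_left hN₁
  obtain ⟨v, hv, hv_ne⟩ := N₂.bot_or_exists_ne_one.resolve_left hN₂
  have huv : Commute u v :=
    commute_of_normal_of_disjoint N₁ N₂ h₁ h₂ (disjoint_iff.mpr inf_eq_bot) u v hu hv
  have zpowers_le : zpowers u ⊓ zpowers v ≤ N₁ ⊓ N₂ :=
    inf_le_inf (zpowers_le_of_mem hu) (zpowers_le_of_mem hv)
  exact hG u v huv hu_ne hv_ne (le_bot_iff.mp (zpowers_le.trans_eq inf_eq_bot))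

theorem freeGroup_normal_inf_ne_bot_general [IsFreeGroup G]
    (N₁ N₂ : Subgroup G) (h₁ : N₁.Normal) (h₂ : N₂.Normal) (hN₁ : N₁ ≠ ⊥) (hN₂ : N₂ ≠ ⊥) :
    N₁ ⊓ N₂ ≠ ⊥ := by
  have := isMulTorsionFree_of_isFreeGroup G
  refine normal_inf_ne_bot_of_zpowers_inf_ne_bot (fun u v huv hu_ne hv_ne => ?_) N₁ N₂ h₁ h₂ hN₁ hN₂
  obtain ⟨z, hu, hv⟩ := exists_mem_zpowers_of_commute huv
  exact zpowers_inf_zpowers_ne_bot hu hv hu_ne hv_ne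

end Group

/-- In a free group on at least two generators, any two non-trivial normal subgroups
intersect non-trivially. -/
theorem freeGroup_normal_inf_ne_bot {α : Type*} [Nontrivial α]
    (N₁ N₂ : Subgroup (FreeGroup α)) (h₁ : N₁.Normal) (h₂ : N₂.Normal)
    (hN₁ : N₁ ≠ ⊥) (hN₂ : N₂ ≠ ⊥) : N₁ ⊓ N₂ ≠ ⊥ :=
  freeGroup_normal_inf_ne_bot_general N₁ N₂ h₁ h₂ hN₁ hN₂
end
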